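/- For every n ≥ 2 and m ≥ 0 there exist k-algebra isomorphisms R^{Λ₁}_{B_n}(m) ≅ R^{Λ₁}_{D_{n+1}}(m) ≅ R^{Λ₂}_{D_{n+1}}(m) between the corresponding cyclotomic quiver Hecke algebras of types B_n and D_{n+1}. -/

import Mathlib

open scoped Classical

namespace QHA

variable (k : Type) [Field k]

/-- Generators of the quiver Hecke algebra `R(β)` on `m` strands with vertex set
`Fin n`: the idempotents `e(ν)`, the polynomial generators `x_p` and the
intertwiners `τ_j` (acting on strands `j`, `j+1`, 0-based). -/
inductive Gen (n m : ℕ) : Type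
  | e (ν : Fin m → Fin n) : Gen n m
  | x (p : Fin m) : Gen n m
  | t (j : ℕ) (h : j + 1 < m) : Gen n m

/-- The free algebra on the generators. -/
abbrev FA (n m : ℕ) := FreeAlgebra k (Gen n m)

variable {n m : ℕ}

noncomputable def Eg (ν : Fin m → Fin n) : FA k n m := FreeAlgebra.ι k (Gen.e ν)
noncomputable def Xg (p : Fin m) : FA k n m := FreeAlgebra.ι k (Gen.x p)
noncomputable def Tg (j : ℕ) (h : j + 1 < m) : FA k n m := FreeAlgebra.ι k (Gen.t j h)

/-- The transposition of the strands `j`, `j+1` (0-based). -/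
def posSwap (j : ℕ) (h : j + 1 < m) : Equiv.Perm (Fin m) :=
  Equiv.swap ⟨j, Nat.lt_of_succ_lt h⟩ ⟨j + 1, h⟩

/-- The place-permutation `s_j ν` of a sequence `ν`. -/
def swapSeq (j : ℕ) (h : j + 1 < m) (ν : Fin m → Fin n) : Fin m → Fin n :=
  ν ∘ posSwap j h

/-- Evaluation of a two-variable polynomial `p(u,v)` at two elements of a
(possibly noncommutative) `k`-algebra, as `Σ t_{p,q} a^p b^q`. -/
noncomputable def eval2 {A : Type} [Ring A] [Algebra k A]
    (p : MvPolynomial (Fin 2) k) (a b : A) : A :=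
  ∑ d ∈ p.support, algebraMap k A (MvPolynomial.coeff d p) * (a ^ d 0 * b ^ d 1)

/-- Evaluation of a three-variable polynomial. -/
noncomputable def eval3 {A : Type} [Ring A] [Algebra k A]
    (p : MvPolynomial (Fin 3) k) (a b c : A) : A :=
  ∑ d ∈ p.support, algebraMap k A (MvPolynomial.coeff d p) * (a ^ d 0 * b ^ d 1 * c ^ d 2)

/-- For `p = Q(u,v)`, the polynomial `(Q(u,v) - Q(w,v))/(u - w)` in the three
variables `u = X 0`, `v = X 1`, `w = X 2` (exact division by the monic `u - w`). -/
noncomputable def Qbar (p : MvPolynomial (Fin 2) k) : MvPolynomial (Fin 3) k :=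
  (MvPolynomial.finSuccEquiv k 2).symm
    (Polynomial.divByMonic
      ((MvPolynomial.finSuccEquiv k 2)
        (MvPolynomial.rename (fun i : Fin 2 => if i = 0 then (0 : Fin 3) else 1) p -
          MvPolynomial.rename (fun i : Fin 2 => if i = 0 then (2 : Fin 3) else 1) p))
      (Polynomial.X - Polynomial.C (MvPolynomial.X 1)))

/-- Admissibility of the family `Q_{i,j}(u,v)` of polynomials with respect to the
(symmetrizable) Cartan matrix `A` and symmetrizing integers `d`
(so `(α_i, α_j) = d_i A_{i j}`):
`Q_{i,i} = 0`; `Q_{j,i}(u,v) = Q_{i,j}(v,u)`; `Q_{i,j} = 1` whenever `(α_i,α_j) = 0`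
(`i ≠ j`); `Q_{i,j}` is supported on `(p,q)` with
`(α_i,α_i) p + (α_j,α_j) q = -2(α_i,α_j)`; and `t_{i,j;-a_{ij},0} ≠ 0`. -/
def QAdmissible (A : Fin n → Fin n → ℤ) (d : Fin n → ℤ)
    (Q : Fin n → Fin n → MvPolynomial (Fin 2) k) : Prop :=
  (∀ i, Q i i = 0) ∧
  (∀ i j, Q j i = MvPolynomial.rename (Equiv.swap (0 : Fin 2) 1) (Q i j)) ∧
  (∀ i j, i ≠ j → d i * A i j = 0 → Q i j = 1) ∧
  (∀ i j, i ≠ j → ∀ dd ∈ (Q i j).support,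
    (2 * d i) * (dd 0 : ℤ) + (2 * d j) * (dd 1 : ℤ) = -2 * (d i * A i j)) ∧
  (∀ i j, i ≠ j →
    MvPolynomial.coeff (Finsupp.single (0 : Fin 2) (-(A i j)).toNat) (Q i j) ≠ 0)

/-- The defining relations of the quiver Hecke algebra `R(β)`, where
`S ⊆ I^m` is the set of admissible sequences (`I^β`; `e(ν) = 0` for `ν ∉ S`). -/
inductive Rel (Q : Fin n → Fin n → MvPolynomial (Fin 2) k) (S : Set (Fin m → Fin n)) :
    FA k n m → FA k n m → Prop
  | e_orth (ν ν' : Fin m → Fin n) (hne : ν ≠ ν') : Rel Q S (Eg k ν * Eg k ν') 0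
  | e_idem (ν : Fin m → Fin n) : Rel Q S (Eg k ν * Eg k ν) (Eg k ν)
  | e_sum : Rel Q S (∑ ν : Fin m → Fin n, Eg k ν) 1
  | e_out (ν : Fin m → Fin n) (hν : ν ∉ S) : Rel Q S (Eg k ν) 0
  | xx (p q : Fin m) : Rel Q S (Xg k p * Xg k q) (Xg k q * Xg k p)
  | xe (p : Fin m) (ν : Fin m → Fin n) : Rel Q S (Xg k p * Eg k ν) (Eg k ν * Xg k p)
  | te (j : ℕ) (h : j + 1 < m) (ν : Fin m → Fin n) :
      Rel Q S (Tg k j h * Eg k ν) (Eg k (swapSeq j h ν) * Tg k j h)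
  | tt (a : ℕ) (ha : a + 1 < m) (b : ℕ) (hb : b + 1 < m) (hab : a + 1 < b ∨ b + 1 < a) :
      Rel Q S (Tg k a ha * Tg k b hb) (Tg k b hb * Tg k a ha)
  | tsq (j : ℕ) (h : j + 1 < m) (ν : Fin m → Fin n) :
      Rel Q S (Tg k j h * Tg k j h * Eg k ν)
        (eval2 k (Q (ν ⟨j, Nat.lt_of_succ_lt h⟩) (ν ⟨j + 1, h⟩))
          (Xg k ⟨j, Nat.lt_of_succ_lt h⟩) (Xg k ⟨j + 1, h⟩) * Eg k ν)
  | tx_left (j : ℕ) (h : j + 1 < m) (ν : Fin m → Fin n)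
      (hv : ν ⟨j, Nat.lt_of_succ_lt h⟩ = ν ⟨j + 1, h⟩) :
      Rel Q S (Tg k j h * Xg k ⟨j, Nat.lt_of_succ_lt h⟩ * Eg k ν)
        (Xg k ⟨j + 1, h⟩ * Tg k j h * Eg k ν - Eg k ν)
  | tx_right (j : ℕ) (h : j + 1 < m) (ν : Fin m → Fin n)
      (hv : ν ⟨j, Nat.lt_of_succ_lt h⟩ = ν ⟨j + 1, h⟩) :
      Rel Q S (Tg k j h * Xg k ⟨j + 1, h⟩ * Eg k ν)
        (Xg k ⟨j, Nat.lt_of_succ_lt h⟩ * Tg k j h * Eg k ν + Eg k ν)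
  | tx_comm (j : ℕ) (h : j + 1 < m) (ν : Fin m → Fin n) (p : Fin m)
      (hcase : ν ⟨j, Nat.lt_of_succ_lt h⟩ ≠ ν ⟨j + 1, h⟩ ∨ ((p : ℕ) ≠ j ∧ (p : ℕ) ≠ j + 1)) :
      Rel Q S (Tg k j h * Xg k p * Eg k ν) (Xg k (posSwap j h p) * Tg k j h * Eg k ν)
  | braid_ne (j : ℕ) (h1 : j + 1 < m) (h2 : j + 2 < m) (ν : Fin m → Fin n)
      (hv : ν ⟨j, by omega⟩ ≠ ν ⟨j + 2, h2⟩) :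
      Rel Q S
        (Tg k (j + 1) (by omega) * Tg k j h1 * Tg k (j + 1) (by omega) * Eg k ν)
        (Tg k j h1 * Tg k (j + 1) (by omega) * Tg k j h1 * Eg k ν)
  | braid_eq (j : ℕ) (h1 : j + 1 < m) (h2 : j + 2 < m) (ν : Fin m → Fin n)
      (hv : ν ⟨j, by omega⟩ = ν ⟨j + 2, h2⟩) :
      Rel Q S
        (Tg k (j + 1) (by omega) * Tg k j h1 * Tg k (j + 1) (by omega) * Eg k ν)
        (Tg k j h1 * Tg k (j + 1) (by omega) * Tg k j h1 * Eg k ν +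
          eval3 k (Qbar k (Q (ν ⟨j, by omega⟩) (ν ⟨j + 1, h1⟩)))
            (Xg k ⟨j, by omega⟩) (Xg k ⟨j + 1, h1⟩) (Xg k ⟨j + 2, h2⟩) * Eg k ν)

/-- The extra cyclotomic relations `x_m^{⟨h_{ν_m}, Λ⟩} e(ν) = 0` (`ν ∈ I^β`),
where `Λ` is written in fundamental-weight coordinates, so `⟨h_i, Λ⟩ = Λ i`. -/
inductive CycRel (Λ : Fin n → ℤ) (S : Set (Fin m → Fin n)) :
    FA k n m → FA k n m → Prop
  | cyc (ν : Fin m → Fin n) (hν : ν ∈ S) (p : Fin m) (hp : (p : ℕ) + 1 = m) :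
      CycRel Λ S (Xg k p ^ (Λ (ν p)).toNat * Eg k ν) 0

/-- Relations of the cyclotomic quiver Hecke algebra `R^Λ(β)`. -/
def CRel (Q : Fin n → Fin n → MvPolynomial (Fin 2) k) (S : Set (Fin m → Fin n))
    (Λ : Fin n → ℤ) : FA k n m → FA k n m → Prop :=
  fun a b => Rel k Q S a b ∨ CycRel k Λ S a b

/-- The `j`-th column of the Cartan matrix: the simple root `α_j` written in
fundamental-weight coordinates (`⟨h_i, α_j⟩ = A i j`). -/
def αcol (A : Fin n → Fin n → ℤ) (j : Fin n) : Fin n → ℤ := fun i => A i j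

/-- `FPath A Λ [i₁, …, i_ℓ] ξ` means `f̃_{i₁} ⋯ f̃_{i_ℓ} Λ = ξ` in the
minuscule crystal realized on the Weyl orbit of `Λ`:
`f̃_j μ = μ - α_j` whenever `⟨h_j, μ⟩ = 1` (and is undefined otherwise). -/
inductive FPath (A : Fin n → Fin n → ℤ) (Λ : Fin n → ℤ) :
    List (Fin n) → (Fin n → ℤ) → Prop
  | nil : FPath A Λ [] Λ
  | cons (j : Fin n) (l : List (Fin n)) (ξ : Fin n → ℤ) :
      FPath A Λ l ξ → ξ j = 1 → FPath A Λ (j :: l) (ξ - αcol A j)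

/-- The simple reflection `s_j μ = μ - ⟨h_j, μ⟩ α_j` on the weight lattice. -/
def sRef (A : Fin n → Fin n → ℤ) (j : Fin n) (μ : Fin n → ℤ) : Fin n → ℤ :=
  fun i => μ i - μ j * A i j

/-- The Weyl group orbit of `Λ` (the Weyl group being generated by the
involutions `s_j`, its orbit consists of images under words in the `s_j`). -/
def orbitW (A : Fin n → Fin n → ℤ) (Λ : Fin n → ℤ) : Set (Fin n → ℤ) :=
  {ξ | ∃ l : List (Fin n), l.foldr (sRef A) Λ = ξ}

end QHA

namespace QHA

/-- The Cartan matrix of type `Bₙ` (0-based labeling; the first node carries the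
short simple root: `a_{1,2} = -2`, `a_{2,1} = -1` in 1-based labels, and
`1 — 2 — ⋯ — n` is a chain). -/
def AB (n : ℕ) : Fin n → Fin n → ℤ := fun i j =>
  if i = j then 2
  else if (i : ℕ) = 0 ∧ (j : ℕ) = 1 then -2
  else if (i : ℕ) + 1 = (j : ℕ) ∨ (j : ℕ) + 1 = (i : ℕ) then -1
  else 0

/-- The symmetrizing integers of type `Bₙ`: `d₁ = 1` and `d_i = 2` for `i ≥ 2`. -/
def dB (n : ℕ) : Fin n → ℤ := fun i => if (i : ℕ) = 0 then 1 else 2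

/-- The Cartan matrix of type `D_n` (0-based labeling: the nodes `0` and `1` are
the two end nodes, both joined to the node `2`, and `2 — 3 — ⋯ — (n-1)` is a chain). -/
def AD (n : ℕ) : Fin n → Fin n → ℤ := fun i j =>
  if i = j then 2
  else if ((i : ℕ) = 0 ∧ (j : ℕ) = 2) ∨ ((i : ℕ) = 2 ∧ (j : ℕ) = 0) then -1
  else if ((i : ℕ) = 1 ∧ (j : ℕ) = 2) ∨ ((i : ℕ) = 2 ∧ (j : ℕ) = 1) then -1
  else if (2 ≤ (i : ℕ) ∧ 2 ≤ (j : ℕ)) ∧ ((i : ℕ) + 1 = (j : ℕ) ∨ (j : ℕ) + 1 = (i : ℕ))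
    then -1
  else 0

/-! ### Combinatorics of weights and paths -/

section Comb

variable {n m : ℕ}

/-- Weight obtained from `Λ` after applying the strands at positions `≥ p`. -/
def wt (A : Fin n → Fin n → ℤ) (Λ : Fin n → ℤ) (ν : Fin m → Fin n) (p : ℕ) (i : Fin n) : ℤ :=
  Λ i - ∑ q : Fin m, if p ≤ (q : ℕ) then A i (ν q) else 0

/-- The tail of `ν` from position `p` on is a path in the minuscule crystal. -/
def TP (A : Fin n → Fin n → ℤ) (Λ : Fin n → ℤ) (ν : Fin m → Fin n) (p : ℕ) : Prop :=
  ∀ q : Fin m, p ≤ (q : ℕ) → wt A Λ ν (q + 1) (ν q) = 1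

variable {A : Fin n → Fin n → ℤ} {Λ : Fin n → ℤ}

theorem wt_end (ν : Fin m → Fin n) (p : ℕ) (hp : m ≤ p) (i : Fin n) : wt A Λ ν p i = Λ i := by
  unfold wt
  rw [Finset.sum_eq_zero, sub_zero]
  intro q _
  have := q.2
  rw [if_neg (by omega)]

theorem wt_succ (ν : Fin m → Fin n) (p : ℕ) (hp : p < m) (i : Fin n) :
    wt A Λ ν p i = wt A Λ ν (p + 1) i - A i (ν ⟨p, hp⟩) := by
  unfold wt
  have : ∀ q : Fin m, (if p ≤ (q : ℕ) then A i (ν q) else 0) =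
      (if p + 1 ≤ (q : ℕ) then A i (ν q) else 0) +
        (if q = ⟨p, hp⟩ then A i (ν q) else 0) := by
    intro q
    by_cases h : q = ⟨p, hp⟩
    · subst h; simp
    · have h' : (q : ℕ) ≠ p := fun h2 => h (Fin.ext h2)
      by_cases h3 : p ≤ (q : ℕ)
      · rw [if_pos h3, if_pos (by omega), if_neg h, add_zero]
      · rw [if_neg h3, if_neg (by omega), if_neg h, add_zero]
  rw [Finset.sum_congr rfl (fun q _ => this q), Finset.sum_add_distrib]
  simp
  ring

theorem wt_congr {ν ν' : Fin m → Fin n} {p : ℕ} (h : ∀ q : Fin m, p ≤ (q : ℕ) → ν q = ν' q)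
    (i : Fin n) : wt A Λ ν p i = wt A Λ ν' p i := by
  unfold wt
  congr 1
  apply Finset.sum_congr rfl
  intro q _
  by_cases hq : p ≤ (q : ℕ)
  · rw [if_pos hq, if_pos hq, h q hq]
  · rw [if_neg hq, if_neg hq]

theorem TP_congr {ν ν' : Fin m → Fin n} {p : ℕ} (h : ∀ q : Fin m, p ≤ (q : ℕ) → ν q = ν' q)
    (H : TP A Λ ν p) : TP A Λ ν' p := by
  intro q hq
  rw [← h q hq, ← wt_congr (ν := ν) (fun r hr => h r (by omega))]
  exact H q hq

theorem TP_mono {ν : Fin m → Fin n} {p p' : ℕ} (h : p ≤ p') (H : TP A Λ ν p) : TP A Λ ν p' :=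
  fun q hq => H q (h.trans hq)

theorem TP_end (ν : Fin m → Fin n) (p : ℕ) (hp : m ≤ p) : TP A Λ ν p := by
  intro q hq; have := q.2; omega

theorem TP_step {ν : Fin m → Fin n} {p : ℕ} (hp : p < m) :
    TP A Λ ν p ↔ TP A Λ ν (p + 1) ∧ wt A Λ ν (p + 1) (ν ⟨p, hp⟩) = 1 := by
  constructor
  · intro H
    exact ⟨TP_mono (Nat.le_succ p) H, H ⟨p, hp⟩ le_rfl⟩
  · rintro ⟨H, h⟩ q hq
    rcases Nat.eq_or_lt_of_le hq with h2 | h2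
    · have : q = ⟨p, hp⟩ := Fin.ext h2.symm
      subst this; exact h
    · exact H q h2

theorem posSwap_left (j : ℕ) (h : j + 1 < m) :
    posSwap j h ⟨j, Nat.lt_of_succ_lt h⟩ = ⟨j + 1, h⟩ := by simp [posSwap]

theorem posSwap_right (j : ℕ) (h : j + 1 < m) :
    posSwap j h ⟨j + 1, h⟩ = ⟨j, Nat.lt_of_succ_lt h⟩ := by simp [posSwap]

theorem posSwap_other (j : ℕ) (h : j + 1 < m) (q : Fin m) (h1 : (q : ℕ) ≠ j)
    (h2 : (q : ℕ) ≠ j + 1) : posSwap j h q = q := by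
  apply Equiv.swap_apply_of_ne_of_ne
  · intro H; exact h1 (congrArg Fin.val H)
  · intro H; exact h2 (congrArg Fin.val H)

theorem swapSeq_left (j : ℕ) (h : j + 1 < m) (ν : Fin m → Fin n) :
    swapSeq j h ν ⟨j, Nat.lt_of_succ_lt h⟩ = ν ⟨j + 1, h⟩ := by
  simp [swapSeq, posSwap_left]

theorem swapSeq_right (j : ℕ) (h : j + 1 < m) (ν : Fin m → Fin n) :
    swapSeq j h ν ⟨j + 1, h⟩ = ν ⟨j, Nat.lt_of_succ_lt h⟩ := by
  simp [swapSeq, posSwap_right]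

theorem swapSeq_other (j : ℕ) (h : j + 1 < m) (ν : Fin m → Fin n) (q : Fin m) (h1 : (q : ℕ) ≠ j)
    (h2 : (q : ℕ) ≠ j + 1) : swapSeq j h ν q = ν q := by
  simp [swapSeq, posSwap_other j h q h1 h2]

theorem swapSeq_swapSeq (j : ℕ) (h : j + 1 < m) (ν : Fin m → Fin n) :
    swapSeq j h (swapSeq j h ν) = ν := by
  funext q; simp [swapSeq, posSwap]

theorem wt_swap (j : ℕ) (h : j + 1 < m) (ν : Fin m → Fin n) (p : ℕ) (hp : p ≠ j + 1) (i : Fin n) :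
    wt A Λ (swapSeq j h ν) p i = wt A Λ ν p i := by
  unfold wt
  congr 1
  rw [← Equiv.sum_comp (posSwap j h)]
  apply Finset.sum_congr rfl
  intro q _
  have h1 : swapSeq j h ν (posSwap j h q) = ν q := by simp [swapSeq, posSwap]
  rw [h1]
  have h2 : (p ≤ ((posSwap j h q : Fin m) : ℕ)) ↔ p ≤ (q : ℕ) := by
    by_cases a : (q : ℕ) = j
    · have : q = ⟨j, Nat.lt_of_succ_lt h⟩ := Fin.ext a
      subst this
      rw [posSwap_left]; simp; omega
    · by_cases b : (q : ℕ) = j + 1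
      · have : q = ⟨j + 1, h⟩ := Fin.ext b
        subst this
        rw [posSwap_right]; simp; omega
      · rw [posSwap_other j h q a b]
  simp only [h2]

/-- Abstract minuscule data. -/
structure Mnsc (A : Fin n → Fin n → ℤ) (Λ : Fin n → ℤ) (m : ℕ) : Prop where
  diag : ∀ i, A i i = 2
  off : ∀ i j, i ≠ j → A i j = 0 ∨ A i j = -1 ∨ A i j = -2
  symm0 : ∀ i j, A i j = 0 → A j i = 0
  lam : ∀ i, Λ i = 0 ∨ Λ i = 1
  bd : ∀ (ν : Fin m → Fin n) (p : ℕ), TP A Λ ν p → ∀ i, -1 ≤ wt A Λ ν p i ∧ wt A Λ ν p i ≤ 1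

theorem Mnsc.not_TP_eq (M : Mnsc A Λ m) (ν : Fin m → Fin n) (j : ℕ) (h : j + 1 < m)
    (p : ℕ) (hp : p ≤ j)
    (hv : ν ⟨j, Nat.lt_of_succ_lt h⟩ = ν ⟨j + 1, h⟩) : ¬ TP A Λ ν p := by
  intro H
  have h1 := H ⟨j, Nat.lt_of_succ_lt h⟩ hp
  have h2 := H ⟨j + 1, h⟩ (by simp; omega)
  have h3 := wt_succ (A := A) (Λ := Λ) ν (j + 1) h (ν ⟨j + 1, h⟩)
  rw [M.diag] at h3
  rw [hv] at h1
  simp only at h1 h2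
  omega

/-- Swapping two orthogonal letters preserves paths. -/
theorem Mnsc.TP_swap (M : Mnsc A Λ m) (ν : Fin m → Fin n) (j : ℕ) (h : j + 1 < m) (p : ℕ)
    (hp : p ≤ j) (h0 : A (ν ⟨j, Nat.lt_of_succ_lt h⟩) (ν ⟨j + 1, h⟩) = 0) (H : TP A Λ ν p) :
    TP A Λ (swapSeq j h ν) p := by
  intro q hq
  by_cases a : (q : ℕ) = j
  · have : q = ⟨j, Nat.lt_of_succ_lt h⟩ := Fin.ext a
    subst this
    rw [swapSeq_left, wt_succ _ _ h, wt_swap _ _ _ _ (by omega), swapSeq_right, M.symm0 _ _ h0,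
      sub_zero]
    exact H ⟨j + 1, h⟩ (by simp; omega)
  · by_cases b : (q : ℕ) = j + 1
    · have : q = ⟨j + 1, h⟩ := Fin.ext b
      subst this
      rw [swapSeq_right, wt_swap _ _ _ _ (by simp)]
      have := H ⟨j, Nat.lt_of_succ_lt h⟩ hp
      rw [wt_succ _ _ h, h0, sub_zero] at this
      exact this
    · rw [swapSeq_other j h ν q a b, wt_swap _ _ _ _ (by omega)]
      exact H q hq

/-- Two consecutive letters of a path that can be swapped are orthogonal. -/
theorem Mnsc.orth_of_swap (_M : Mnsc A Λ m) (ν : Fin m → Fin n) (j : ℕ) (h : j + 1 < m) (p : ℕ)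
    (hp : p ≤ j) (H : TP A Λ ν p) (H' : TP A Λ (swapSeq j h ν) (j + 1)) :
    A (ν ⟨j, Nat.lt_of_succ_lt h⟩) (ν ⟨j + 1, h⟩) = 0 := by
  have h1 := H ⟨j, Nat.lt_of_succ_lt h⟩ hp
  have h2 := H' ⟨j + 1, h⟩ (by simp)
  rw [swapSeq_right, wt_swap _ _ _ _ (by simp)] at h2
  rw [wt_succ _ _ h] at h1
  simp only at h1 h2
  omega

/-- In a path, `i j i` forces `a_{ij} = -2`. -/
theorem Mnsc.iji (M : Mnsc A Λ m) (ν : Fin m → Fin n) (j : ℕ) (h1 : j + 1 < m) (h2 : j + 2 < m)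
    (hv : ν ⟨j, by omega⟩ = ν ⟨j + 2, h2⟩) (H : TP A Λ ν 0) :
    A (ν ⟨j, by omega⟩) (ν ⟨j + 1, h1⟩) = -2 := by
  have a1 := H ⟨j, by omega⟩ (Nat.zero_le _)
  have a2 := H ⟨j + 2, h2⟩ (Nat.zero_le _)
  rw [wt_succ _ _ h1, wt_succ _ _ h2] at a1
  rw [← hv, M.diag] at a1
  rw [← hv] at a2
  simp only at a1 a2
  omega

theorem Mnsc.neg (M : Mnsc A Λ m) (ν : Fin m → Fin n) (i : Fin n) :
    ∀ (l p : ℕ), p + l = m → TP A Λ ν p → wt A Λ ν p i = -1 →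
      ∃ q : Fin m, p ≤ (q : ℕ) ∧ ν q = i ∧
        ∀ r : Fin m, p ≤ (r : ℕ) → (r : ℕ) < q → ν r ≠ i ∧ A i (ν r) = 0 := by
  intro l
  induction l with
  | zero =>
    intro p hp _ hw
    rw [wt_end _ _ (by omega)] at hw
    rcases M.lam i with h | h <;> omega
  | succ l ih =>
    intro p hp H hw
    have hpm : p < m := by omega
    by_cases hi : ν ⟨p, hpm⟩ = i
    · refine ⟨⟨p, hpm⟩, le_rfl, hi, ?_⟩
      intro r h1 h2
      simp only at h2
      omega
    · have hs := wt_succ (A := A) (Λ := Λ) ν p hpm i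
      have H' := (TP_step hpm).1 H
      have hb := M.bd ν (p + 1) H'.1 i
      have ho := M.off i (ν ⟨p, hpm⟩) (fun h => hi h.symm)
      obtain ⟨q, hq, hqi, hall⟩ := ih (p + 1) (by omega) H'.1 (by omega)
      refine ⟨q, by omega, hqi, ?_⟩
      intro r h1 h2
      rcases Nat.eq_or_lt_of_le h1 with h3 | h3
      · have : r = ⟨p, hpm⟩ := Fin.ext h3.symm
        subst this
        exact ⟨hi, by omega⟩
      · exact hall r h3 h2

end Comb

/-! ### Vanishing in the cyclotomic quotient -/

section Vanish

/-- The consequences of the defining relations which are used. -/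
structure QH (k : Type) [Field k] {n m : ℕ} (A : Fin n → Fin n → ℤ) (Λ : Fin n → ℤ)
    {R : Type} [Ring R] [Algebra k R] (e : (Fin m → Fin n) → R) (x : Fin m → R)
    (t : (j : ℕ) → j + 1 < m → R) : Prop where
  orth : ∀ ν ν', ν ≠ ν' → e ν * e ν' = 0
  idem : ∀ ν, e ν * e ν = e ν
  sum : ∑ ν, e ν = 1
  xe : ∀ p ν, x p * e ν = e ν * x p
  te : ∀ j h ν, t j h * e ν = e (swapSeq j h ν) * t j h
  tt : ∀ a ha b hb, (a + 1 < b ∨ b + 1 < a) → t a ha * t b hb = t b hb * t a ha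
  tsq0 : ∀ j h ν, ν ⟨j, Nat.lt_of_succ_lt h⟩ ≠ ν ⟨j + 1, h⟩ →
    A (ν ⟨j, Nat.lt_of_succ_lt h⟩) (ν ⟨j + 1, h⟩) = 0 → t j h * t j h * e ν = e ν
  tsqd : ∀ j h ν, ν ⟨j, Nat.lt_of_succ_lt h⟩ = ν ⟨j + 1, h⟩ → t j h * t j h * e ν = 0
  tsq1 : ∀ j h ν, A (ν ⟨j, Nat.lt_of_succ_lt h⟩) (ν ⟨j + 1, h⟩) = -1 →
    ∃ (a b : k) (r : ℕ), a ≠ 0 ∧ t j h * t j h * e ν =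
      (a • x ⟨j, Nat.lt_of_succ_lt h⟩ + b • x ⟨j + 1, h⟩ ^ (r + 1)) * e ν
  txr : ∀ j h ν, ν ⟨j, Nat.lt_of_succ_lt h⟩ = ν ⟨j + 1, h⟩ →
    t j h * x ⟨j + 1, h⟩ * e ν = x ⟨j, Nat.lt_of_succ_lt h⟩ * t j h * e ν + e ν
  txc : ∀ j h ν p, (ν ⟨j, Nat.lt_of_succ_lt h⟩ ≠ ν ⟨j + 1, h⟩ ∨
    ((p : Fin m) : ℕ) ≠ j ∧ (p : ℕ) ≠ j + 1) →
    t j h * x p * e ν = x (posSwap j h p) * t j h * e ν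
  brn : ∀ (j : ℕ) (h1 : j + 1 < m) (h2 : j + 2 < m) (ν : Fin m → Fin n),
    ν ⟨j, by omega⟩ ≠ ν ⟨j + 2, h2⟩ →
    t (j + 1) h2 * t j h1 * t (j + 1) h2 * e ν = t j h1 * t (j + 1) h2 * t j h1 * e ν
  br1 : ∀ (j : ℕ) (h1 : j + 1 < m) (h2 : j + 2 < m) (ν : Fin m → Fin n),
    ν ⟨j, by omega⟩ = ν ⟨j + 2, h2⟩ → A (ν ⟨j, by omega⟩) (ν ⟨j + 1, h1⟩) = -1 →
    ∃ a : k, a ≠ 0 ∧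
    t (j + 1) h2 * t j h1 * t (j + 1) h2 * e ν = t j h1 * t (j + 1) h2 * t j h1 * e ν + a • e ν
  br2 : ∀ (j : ℕ) (h1 : j + 1 < m) (h2 : j + 2 < m) (ν : Fin m → Fin n),
    ν ⟨j, by omega⟩ = ν ⟨j + 2, h2⟩ → A (ν ⟨j, by omega⟩) (ν ⟨j + 1, h1⟩) = -2 →
    ∃ a : k, a ≠ 0 ∧
    t (j + 1) h2 * t j h1 * t (j + 1) h2 * e ν = t j h1 * t (j + 1) h2 * t j h1 * e ν +
      a • (x ⟨j, by omega⟩ + x ⟨j + 2, h2⟩) * e ν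
  cyc0 : ∀ (ν : Fin m → Fin n) (p : Fin m), (p : ℕ) + 1 = m → Λ (ν p) = 0 → e ν = 0
  cyc1 : ∀ (ν : Fin m → Fin n) (p : Fin m), (p : ℕ) + 1 = m → Λ (ν p) = 1 → x p * e ν = 0

variable {k : Type} [Field k] {n m : ℕ} {A : Fin n → Fin n → ℤ} {Λ : Fin n → ℤ}
    {R : Type} [Ring R] [Algebra k R] {e : (Fin m → Fin n) → R} {x : Fin m → R}
    {t : (j : ℕ) → j + 1 < m → R}

theorem QH.te0 (H : QH k A Λ e x t) (j : ℕ) (h : j + 1 < m) (ν : Fin m → Fin n)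
    (h0 : e (swapSeq j h ν) = 0) : t j h * e ν = 0 := by
  rw [H.te, h0, zero_mul]

theorem QH.braid0 (H : QH k A Λ e x t) (j : ℕ) (h1 : j + 1 < m) (h2 : j + 2 < m)
    (ν : Fin m → Fin n) (a1 : e (swapSeq j h1 ν) = 0) (a2 : e (swapSeq (j + 1) h2 ν) = 0) :
    t (j + 1) h2 * t j h1 * t (j + 1) h2 * e ν = 0 ∧
      t j h1 * t (j + 1) h2 * t j h1 * e ν = 0 := by
  constructor
  · rw [mul_assoc, H.te0 _ _ _ a2, mul_zero]
  · rw [mul_assoc, H.te0 _ _ _ a1, mul_zero]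

theorem QH.chain (H : QH k A Λ e x t) (M : Mnsc A Λ m) (p : ℕ)
    (IH : ∀ ν : Fin m → Fin n, (¬ TP A Λ ν (p + 1) → e ν = 0) ∧
      ∀ q : Fin m, p + 1 ≤ (q : ℕ) → x q * e ν = 0) :
    ∀ (d : ℕ) (hd : p + 2 + d < m) (ν : Fin m → Fin n),
      ν ⟨p, by omega⟩ = ν ⟨p + 2 + d, hd⟩ →
      (∀ r : Fin m, p + 2 ≤ (r : ℕ) → (r : ℕ) < p + 2 + d →
        ν r ≠ ν ⟨p, by omega⟩ ∧ A (ν ⟨p, by omega⟩) (ν r) = 0) →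
      (A (ν ⟨p, by omega⟩) (ν ⟨p + 1, by omega⟩) = -1 → e ν = 0) ∧
      (A (ν ⟨p, by omega⟩) (ν ⟨p + 1, by omega⟩) = -2 → x ⟨p, by omega⟩ * e ν = 0) := by
  intro d
  induction d with
  | zero =>
    intro hd ν hν _
    have h1 : p + 1 < m := by omega
    have h2 : p + 2 < m := by omega
    by_cases hT : TP A Λ ν (p + 1)
    swap
    · have := (IH ν).1 hT
      simp [this]
    have hs1 : e (swapSeq p h1 ν) = 0 := by
      apply (IH _).1
      apply M.not_TP_eq _ (p + 1) h2 _ le_rfl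
      rw [swapSeq_right, swapSeq_other _ _ _ _ (by show p + 1 + 1 ≠ p; omega) (by simp)]
      exact hν
    have hs2 (hA : A (ν ⟨p, by omega⟩) (ν ⟨p + 1, h1⟩) ≠ 0) : e (swapSeq (p + 1) h2 ν) = 0 := by
      apply (IH _).1
      intro hT'
      have h3 := M.orth_of_swap ν (p + 1) h2 (p + 1) le_rfl hT (TP_mono (by omega) hT')
      apply hA
      apply M.symm0
      rw [hν]
      exact h3
    constructor
    · intro hA
      obtain ⟨a, ha, hbr⟩ := H.br1 p h1 h2 ν hν hA
      obtain ⟨b1, b2⟩ := H.braid0 p h1 h2 ν hs1 (hs2 (by rw [hA]; norm_num))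
      rw [b1, b2, zero_add] at hbr
      exact (smul_eq_zero.1 hbr.symm).resolve_left ha
    · intro hA
      obtain ⟨a, ha, hbr⟩ := H.br2 p h1 h2 ν hν hA
      obtain ⟨b1, b2⟩ := H.braid0 p h1 h2 ν hs1 (hs2 (by rw [hA]; norm_num))
      rw [b1, b2, zero_add, smul_mul_assoc, add_mul,
        (IH ν).2 ⟨p + 2, h2⟩ (by simp), add_zero] at hbr
      exact (smul_eq_zero.1 hbr.symm).resolve_left ha
  | succ d ih =>
    intro hd ν hν hall
    have hr : p + 2 + d + 1 < m := by omega
    have hr' : p + 2 + d < m := by omega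
    obtain ⟨c1, c2⟩ := hall ⟨p + 2 + d, hr'⟩ (by simp) (by simp)
    have hν2 : ν ⟨p, by omega⟩ = ν ⟨p + 2 + d + 1, hr⟩ := hν
    have hsq := H.tsq0 (p + 2 + d) hr ν (by rw [← hν2]; exact c1)
      (by rw [← hν2]; exact M.symm0 _ _ c2)
    have e1 : e ν = t _ hr * e (swapSeq _ hr ν) * t _ hr := by
      conv_lhs => rw [← hsq]
      rw [mul_assoc, H.te, mul_assoc]
    have sp : swapSeq _ hr ν ⟨p, by omega⟩ = ν ⟨p, by omega⟩ :=
      swapSeq_other _ _ _ _ (by simp; omega) (by simp; omega)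
    have sp1 : swapSeq _ hr ν ⟨p + 1, by omega⟩ = ν ⟨p + 1, by omega⟩ :=
      swapSeq_other _ _ _ _ (by simp; omega) (by simp; omega)
    have key := ih hr' (swapSeq _ hr ν) (by rw [swapSeq_left, sp]; exact hν) (by
      intro r a1 a2
      rw [sp, swapSeq_other _ _ _ _ (by omega) (by omega)]
      exact hall r a1 (by omega))
    rw [sp, sp1] at key
    constructor
    · intro hA
      rw [e1, key.1 hA, mul_zero, zero_mul]
    · intro hA
      have hc := H.txc (p + 2 + d) hr (swapSeq _ hr ν) ⟨p, by omega⟩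
        (Or.inr ⟨by simp; omega, by simp; omega⟩)
      rw [posSwap_other _ _ _ (by simp; omega) (by simp; omega), mul_assoc, key.2 hA,
        mul_zero] at hc
      rw [e1, ← mul_assoc, ← mul_assoc, ← hc, zero_mul]

theorem QH.step (H : QH k A Λ e x t) (M : Mnsc A Λ m) (p : ℕ) (hp : p < m)
    (IH : ∀ ν : Fin m → Fin n, (¬ TP A Λ ν (p + 1) → e ν = 0) ∧
      ∀ q : Fin m, p + 1 ≤ (q : ℕ) → x q * e ν = 0) (ν : Fin m → Fin n)
    (hT : TP A Λ ν (p + 1)) :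
    (wt A Λ ν (p + 1) (ν ⟨p, hp⟩) ≠ 1 → e ν = 0) ∧ x ⟨p, hp⟩ * e ν = 0 := by
  rcases Nat.eq_or_lt_of_le (show p + 1 ≤ m from hp) with hm | hm
  · rw [wt_end _ _ hm.ge]
    rcases M.lam (ν ⟨p, hp⟩) with h | h
    · have := H.cyc0 ν ⟨p, hp⟩ hm h
      simp [this]
    · have := H.cyc1 ν ⟨p, hp⟩ hm h
      exact ⟨fun h' => absurd h h', this⟩
  · by_cases hij : ν ⟨p, hp⟩ = ν ⟨p + 1, hm⟩
    · have h1 := H.txr p hm ν hij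
      have hs : swapSeq p hm ν = ν := by
        funext q
        by_cases a : (q : ℕ) = p
        · have : q = ⟨p, hp⟩ := Fin.ext a
          subst this
          rw [swapSeq_left, hij]
        · by_cases b : (q : ℕ) = p + 1
          · have : q = ⟨p + 1, hm⟩ := Fin.ext b
            subst this
            rw [swapSeq_right, hij]
          · rw [swapSeq_other _ _ _ _ a b]
      rw [mul_assoc, (IH ν).2 ⟨p + 1, hm⟩ le_rfl, mul_zero] at h1
      have h2 : e ν = - (x ⟨p, hp⟩ * t p hm * e ν) := (neg_eq_of_add_eq_zero_right h1.symm).symm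
      have h3 := H.te p hm ν
      rw [hs] at h3
      have h4 : t p hm * e ν = 0 := by
        have h5 := H.tsqd p hm ν hij
        rw [h3, h2, neg_mul, mul_assoc, ← h3, mul_assoc, ← mul_assoc (t p hm), h5, mul_zero,
          neg_zero]
      have h5 : e ν = 0 := by rw [h2, mul_assoc, h4, mul_zero, neg_zero]
      simp [h5]
    · have hsucc := wt_succ (A := A) (Λ := Λ) ν (p + 1) hm (ν ⟨p, hp⟩)
      have hT2 := (TP_step hm).1 hT
      have hb1 := M.bd ν _ hT (ν ⟨p, hp⟩)
      have hb2 := M.bd ν _ hT2.1 (ν ⟨p, hp⟩)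
      have e1 : t p hm * t p hm * e ν = t p hm * e (swapSeq p hm ν) * t p hm := by
        rw [mul_assoc, H.te, mul_assoc]
      have hwS : wt A Λ (swapSeq p hm ν) (p + 1 + 1) (swapSeq p hm ν ⟨p + 1, hm⟩) =
          wt A Λ ν (p + 1 + 1) (ν ⟨p, hp⟩) := by
        rw [wt_swap _ _ _ _ (by omega), swapSeq_right]
      have hchain : wt A Λ ν (p + 1 + 1) (ν ⟨p, hp⟩) = -1 →
          (A (ν ⟨p, hp⟩) (ν ⟨p + 1, hm⟩) = -1 → e ν = 0) ∧
          (A (ν ⟨p, hp⟩) (ν ⟨p + 1, hm⟩) = -2 → x ⟨p, hp⟩ * e ν = 0) := by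
        intro hw
        obtain ⟨q, hq, hqi, hall⟩ := M.neg ν (ν ⟨p, hp⟩) (m - (p + 1 + 1)) (p + 1 + 1) (by omega)
          hT2.1 hw
        obtain ⟨d, hd⟩ := Nat.exists_eq_add_of_le hq
        have hqm := q.2
        have hqe : q = ⟨p + 2 + d, by omega⟩ := Fin.ext hd
        apply H.chain M p IH d (by omega) ν
        · rw [← hqe, hqi]
        · intro r a1 a2
          exact hall r a1 (by omega)
      rcases M.off _ _ hij with h0 | h1 | h2
      · have hsq := H.tsq0 p hm ν hij h0
        rw [e1] at hsq
        constructor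
        · intro hw
          rw [← hsq, (IH (swapSeq p hm ν)).1, mul_zero, zero_mul]
          intro hT'
          have := ((TP_step hm).1 hT').2
          omega
        · have hc := H.txc p hm (swapSeq p hm ν) ⟨p + 1, hm⟩ (by
            left; rw [swapSeq_left, swapSeq_right]; exact fun h => hij h.symm)
          rw [mul_assoc, (IH _).2 ⟨p + 1, hm⟩ le_rfl, mul_zero, posSwap_right] at hc
          rw [← hsq, ← mul_assoc, ← mul_assoc, ← hc, zero_mul]
      · have hx : x ⟨p, hp⟩ * e ν = 0 := by
          obtain ⟨a, b, r, ha, hsq⟩ := H.tsq1 p hm ν h1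
          rw [e1, (IH (swapSeq p hm ν)).1, mul_zero, zero_mul, add_mul, smul_mul_assoc,
            smul_mul_assoc, pow_succ, mul_assoc, (IH ν).2 ⟨p + 1, hm⟩ le_rfl, mul_zero, smul_zero,
            add_zero] at hsq
          · exact (smul_eq_zero.1 hsq.symm).resolve_left ha
          · intro hT'
            have := ((TP_step hm).1 hT').2
            omega
        refine ⟨fun hw => ?_, hx⟩
        exact (hchain (by omega)).1 h1
      · refine ⟨fun hw => ?_, (hchain (by omega)).2 h2⟩
        omega

theorem QH.vanish (H : QH k A Λ e x t) (M : Mnsc A Λ m) :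
    ∀ (l p : ℕ), p + l = m → ∀ ν : Fin m → Fin n, (¬ TP A Λ ν p → e ν = 0) ∧
      ∀ q : Fin m, p ≤ (q : ℕ) → x q * e ν = 0 := by
  intro l
  induction l with
  | zero =>
    intro p hp ν
    refine ⟨fun h => absurd (TP_end ν p (by omega)) h, fun q hq => ?_⟩
    have := q.2
    omega
  | succ l ih =>
    intro p hp ν
    have hpm : p < m := by omega
    have IH := ih (p + 1) (by omega)
    by_cases hT : TP A Λ ν (p + 1)
    · have hs := H.step M p hpm IH ν hT
      constructor
      · intro hn
        apply hs.1
        intro h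
        exact hn ((TP_step hpm).2 ⟨hT, h⟩)
      · intro q hq
        rcases Nat.eq_or_lt_of_le hq with h3 | h3
        · have : q = ⟨p, hpm⟩ := Fin.ext h3.symm
          subst this
          exact hs.2
        · exact (IH ν).2 q h3
    · have := (IH ν).1 hT
      simp [this]

/-- The reduced presentation: `P` is the set of paths. -/
structure Pkg (n m : ℕ) (P : (Fin m → Fin n) → Prop)
    {R : Type} [Ring R] (e : (Fin m → Fin n) → R)
    (t : (j : ℕ) → j + 1 < m → R) : Prop where
  orth : ∀ ν ν', ν ≠ ν' → e ν * e ν' = 0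
  idem : ∀ ν, e ν * e ν = e ν
  sum : ∑ ν, e ν = 1
  zero : ∀ ν, ¬ P ν → e ν = 0
  te : ∀ j h ν, t j h * e ν = e (swapSeq j h ν) * t j h
  tt : ∀ a ha b hb, (a + 1 < b ∨ b + 1 < a) → t a ha * t b hb = t b hb * t a ha
  tsq : ∀ j h ν, P ν → P (swapSeq j h ν) → t j h * t j h * e ν = e ν
  br : ∀ (j : ℕ) (h1 : j + 1 < m) (h2 : j + 2 < m) (ν : Fin m → Fin n),
    t (j + 1) h2 * t j h1 * t (j + 1) h2 * e ν = t j h1 * t (j + 1) h2 * t j h1 * e ν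

theorem QH.x_zero (H : QH k A Λ e x t) (M : Mnsc A Λ m) (p : Fin m) : x p = 0 := by
  rw [← mul_one (x p), ← H.sum, Finset.mul_sum]
  exact Finset.sum_eq_zero fun ν _ => (H.vanish M m 0 (by omega) ν).2 p (Nat.zero_le _)

theorem QH.pkg (H : QH k A Λ e x t) (M : Mnsc A Λ m) :
    Pkg n m (fun ν => TP A Λ ν 0) e t where
  orth := H.orth
  idem := H.idem
  sum := H.sum
  zero := fun ν hν => (H.vanish M m 0 (by omega) ν).1 hν
  te := H.te
  tt := H.tt
  tsq := by
    intro j h ν h1 h2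
    apply H.tsq0
    · intro h3
      exact M.not_TP_eq ν j h 0 (Nat.zero_le _) h3 h1
    · exact M.orth_of_swap ν j h 0 (Nat.zero_le _) h1 (TP_mono (Nat.zero_le _) h2)
  br := by
    intro j h1 h2 ν
    by_cases hT : TP A Λ ν 0
    · by_cases hv : ν ⟨j, by omega⟩ = ν ⟨j + 2, h2⟩
      · obtain ⟨a, _, hbr⟩ := H.br2 j h1 h2 ν hv (M.iji ν j h1 h2 hv hT)
        rw [hbr, H.x_zero M, H.x_zero M]
        simp
      · exact H.brn j h1 h2 ν hv
    · have := (H.vanish M m 0 (by omega) ν).1 hT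
      simp [this]

/-- Transport of the reduced presentation along a swap-compatible bijection of path sets. -/
theorem Pkg.transport {n' : ℕ} {P : (Fin m → Fin n) → Prop} {P' : (Fin m → Fin n') → Prop}
    (H : Pkg n m P e t) (φ : {ν // P ν} ≃ {ν // P' ν})
    (hφ : ∀ j h (ν : {ν // P ν}) (ν' : {ν // P ν}), ν'.1 = swapSeq j h ν.1 ↔
      (φ ν').1 = swapSeq j h (φ ν).1) :
    Pkg n' m P' (fun ν => if h : P' ν then e (φ.symm ⟨ν, h⟩).1 else 0) t where
  orth := by
    intro ν ν' hne
    by_cases h : P' ν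
    · by_cases h' : P' ν'
      · rw [dif_pos h, dif_pos h']
        apply H.orth
        intro he
        have := φ.symm.injective (Subtype.ext he)
        exact hne (congrArg Subtype.val this)
      · rw [dif_neg h', mul_zero]
    · rw [dif_neg h, zero_mul]
  idem := by
    intro ν
    by_cases h : P' ν
    · rw [dif_pos h, H.idem]
    · rw [dif_neg h, mul_zero]
  sum := by
    rw [← H.sum, ← Finset.sum_subset (Finset.subset_univ (Finset.univ.filter P')),
      ← Finset.sum_subset (Finset.subset_univ (Finset.univ.filter P)),
      Finset.sum_subtype _ (p := P') (by simp), Finset.sum_subtype _ (p := P) (by simp),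
      ← Equiv.sum_comp φ]
    · apply Finset.sum_congr rfl
      intro ν _
      rw [dif_pos (φ ν).2]
      simp
    · intro ν _ h
      apply H.zero
      simpa using h
    · intro ν _ h
      rw [dif_neg]
      simpa using h
  zero := fun ν hν => dif_neg hν
  te := by
    intro j h ν
    by_cases h1 : P' ν
    · rw [dif_pos h1, H.te]
      by_cases h2 : P' (swapSeq j h ν)
      · rw [dif_pos h2, (hφ j h (φ.symm ⟨ν, h1⟩) (φ.symm ⟨_, h2⟩)).2 (by simp)]
      · rw [dif_neg h2, H.zero, zero_mul]
        intro h3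
        apply h2
        have := (hφ j h (φ.symm ⟨ν, h1⟩) ⟨_, h3⟩).1 rfl
        rw [Equiv.apply_symm_apply] at this
        simp only at this
        rw [← this]
        exact (φ _).2
    · rw [dif_neg h1, mul_zero]
      by_cases h2 : P' (swapSeq j h ν)
      · rw [dif_pos h2]
        set μ := φ.symm ⟨_, h2⟩ with hμ
        have h4 : e μ.1 * t j h = t j h * e (swapSeq j h μ.1) := by
          rw [H.te, swapSeq_swapSeq]
        rw [h4, H.zero, mul_zero]
        intro h3
        apply h1
        have := (hφ j h μ ⟨_, h3⟩).1 rfl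
        have hμ2 : φ μ = ⟨_, h2⟩ := by rw [hμ, Equiv.apply_symm_apply]
        rw [hμ2] at this
        simp only [swapSeq_swapSeq] at this
        rw [← this]
        exact (φ _).2
      · rw [dif_neg h2, zero_mul]
  tt := H.tt
  tsq := by
    intro j h ν h1 h2
    rw [dif_pos h1]
    apply H.tsq _ _ _ (φ.symm ⟨ν, h1⟩).2
    have := (hφ j h (φ.symm ⟨ν, h1⟩) (φ.symm ⟨_, h2⟩)).2 (by simp)
    rw [← this]
    exact (φ.symm ⟨_, h2⟩).2
  br := by
    intro j h1 h2 ν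
    by_cases h : P' ν
    · rw [dif_pos h, H.br]
    · simp only [dif_neg h, mul_zero]

end Vanish

/-! ### The presentation of the cyclotomic quotient -/

section Pres

open MvPolynomial

variable {k : Type} [Field k] {n m : ℕ} {A : Fin n → Fin n → ℤ} {Λ : Fin n → ℤ}
    {R : Type} [Ring R] [Algebra k R]

theorem eval2_eq_sum (p : MvPolynomial (Fin 2) k) (a b : R) (s : Finset (Fin 2 →₀ ℕ))
    (hs : p.support ⊆ s) :
    eval2 k p a b = ∑ d ∈ s, algebraMap k R (coeff d p) * (a ^ d 0 * b ^ d 1) := by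
  unfold eval2
  apply Finset.sum_subset hs
  intro d _ hd
  rw [notMem_support_iff.1 hd, map_zero, zero_mul]

theorem eval3_eq_sum (p : MvPolynomial (Fin 3) k) (a b c : R) (s : Finset (Fin 3 →₀ ℕ))
    (hs : p.support ⊆ s) :
    eval3 k p a b c =
      ∑ d ∈ s, algebraMap k R (coeff d p) * (a ^ d 0 * b ^ d 1 * c ^ d 2) := by
  unfold eval3
  apply Finset.sum_subset hs
  intro d _ hd
  rw [notMem_support_iff.1 hd, map_zero, zero_mul]

theorem eval2_add (p q : MvPolynomial (Fin 2) k) (a b : R) :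
    eval2 k (p + q) a b = eval2 k p a b + eval2 k q a b := by
  rw [eval2_eq_sum (p + q) a b (p.support ∪ q.support) support_add,
    eval2_eq_sum p a b (p.support ∪ q.support) Finset.subset_union_left,
    eval2_eq_sum q a b (p.support ∪ q.support) Finset.subset_union_right,
    ← Finset.sum_add_distrib]
  simp [add_mul]

theorem eval3_add (p q : MvPolynomial (Fin 3) k) (a b c : R) :
    eval3 k (p + q) a b c = eval3 k p a b c + eval3 k q a b c := by
  rw [eval3_eq_sum (p + q) a b c (p.support ∪ q.support) support_add,
    eval3_eq_sum p a b c (p.support ∪ q.support) Finset.subset_union_left,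
    eval3_eq_sum q a b c (p.support ∪ q.support) Finset.subset_union_right,
    ← Finset.sum_add_distrib]
  simp [add_mul]

theorem eval2_monomial (d : Fin 2 →₀ ℕ) (r : k) (a b : R) :
    eval2 k (monomial d r) a b = r • (a ^ d 0 * b ^ d 1) := by
  rw [eval2_eq_sum _ a b {d} support_monomial_subset]
  simp [Algebra.smul_def]

theorem eval3_monomial (d : Fin 3 →₀ ℕ) (r : k) (a b c : R) :
    eval3 k (monomial d r) a b c = r • (a ^ d 0 * b ^ d 1 * c ^ d 2) := by
  rw [eval3_eq_sum _ a b c {d} support_monomial_subset]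
  simp [Algebra.smul_def]

theorem eval2_zero (a b : R) : eval2 k (0 : MvPolynomial (Fin 2) k) a b = 0 := by
  simp [eval2]

theorem eval3_zero (a b c : R) : eval3 k (0 : MvPolynomial (Fin 3) k) a b c = 0 := by
  simp [eval3]

theorem eval2_one (a b : R) : eval2 k (1 : MvPolynomial (Fin 2) k) a b = 1 := by
  have : (1 : MvPolynomial (Fin 2) k) = monomial 0 1 := rfl
  rw [this, eval2_monomial]
  simp

theorem map_eval2 {R' : Type} [Ring R'] [Algebra k R'] (f : R →ₐ[k] R')
    (p : MvPolynomial (Fin 2) k) (a b : R) :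
    f (eval2 k p a b) = eval2 k p (f a) (f b) := by
  simp [eval2, map_sum]

theorem map_eval3 {R' : Type} [Ring R'] [Algebra k R'] (f : R →ₐ[k] R')
    (p : MvPolynomial (Fin 3) k) (a b c : R) :
    f (eval3 k p a b c) = eval3 k p (f a) (f b) (f c) := by
  simp [eval3, map_sum]

theorem Qbar_eq (p : MvPolynomial (Fin 2) k) (g : MvPolynomial (Fin 3) k)
    (h : rename (fun i : Fin 2 => if i = 0 then (0 : Fin 3) else 1) p -
          rename (fun i : Fin 2 => if i = 0 then (2 : Fin 3) else 1) p =
        (X 0 - X 2) * g) : Qbar k p = g := by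
  unfold Qbar
  rw [h, map_mul]
  have h2 : (finSuccEquiv k 2) (X 0 - X 2) = Polynomial.X - Polynomial.C (X 1) := by
    rw [map_sub, finSuccEquiv_X_zero]
    congr 1
    exact finSuccEquiv_X_succ (j := (1 : Fin 2))
  rw [h2, Polynomial.mul_divByMonic_cancel_left _ (Polynomial.monic_X_sub_C _)]
  simp

theorem mono_eq (i : Fin 2) (s : ℕ) (a : k) :
    monomial (Finsupp.single i s) a = C a * X i ^ s := by
  rw [C_mul_X_pow_eq_monomial]

theorem Qbar_one (a b : k) (r : ℕ) :
    Qbar k (monomial (Finsupp.single (0 : Fin 2) 1) a + monomial (Finsupp.single 1 r) b) =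
      monomial 0 a := by
  apply Qbar_eq
  rw [mono_eq, mono_eq]
  have : (monomial 0 a : MvPolynomial (Fin 3) k) = C a := rfl
  rw [this]
  simp
  ring

theorem Qbar_two (a b : k) (r : ℕ) :
    Qbar k (monomial (Finsupp.single (0 : Fin 2) 2) a + monomial (Finsupp.single 1 r) b) =
      monomial (Finsupp.single (0 : Fin 3) 1) a + monomial (Finsupp.single (2 : Fin 3) 1) a := by
  apply Qbar_eq
  rw [mono_eq, mono_eq, ← C_mul_X_pow_eq_monomial, ← C_mul_X_pow_eq_monomial]
  simp
  ring

/-- The explicit shape of an admissible family of polynomials. -/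
structure QShape (A : Fin n → Fin n → ℤ) (Q : Fin n → Fin n → MvPolynomial (Fin 2) k) : Prop where
  diag : ∀ i, Q i i = 0
  zero : ∀ i j, i ≠ j → A i j = 0 → Q i j = 1
  one : ∀ i j, A i j = -1 → ∃ (a b : k) (r : ℕ), a ≠ 0 ∧ Q i j =
    monomial (Finsupp.single (0 : Fin 2) 1) a + monomial (Finsupp.single 1 (r + 1)) b
  two : ∀ i j, A i j = -2 → ∃ (a b : k) (r : ℕ), a ≠ 0 ∧ Q i j =
    monomial (Finsupp.single (0 : Fin 2) 2) a + monomial (Finsupp.single 1 (r + 1)) b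

/-- The cyclotomic quiver Hecke algebra. -/
abbrev RQ (Q : Fin n → Fin n → MvPolynomial (Fin 2) k) (Λ : Fin n → ℤ) (m : ℕ) : Type :=
  RingQuot (CRel k Q (Set.univ : Set (Fin m → Fin n)) Λ)

/-- The quotient map. -/
noncomputable abbrev mkQ (Q : Fin n → Fin n → MvPolynomial (Fin 2) k) (Λ : Fin n → ℤ) (m : ℕ) :
    FA k n m →ₐ[k] RQ Q Λ m :=
  RingQuot.mkAlgHom k (CRel k Q (Set.univ : Set (Fin m → Fin n)) Λ)

theorem qh_RQ {Q : Fin n → Fin n → MvPolynomial (Fin 2) k} (S : QShape A Q) :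
    QH k A Λ (fun ν => mkQ Q Λ m (Eg k ν)) (fun p => mkQ Q Λ m (Xg k p))
      (fun j h => mkQ Q Λ m (Tg k j h)) := by
  have rel : ∀ {a b}, Rel k Q (Set.univ : Set (Fin m → Fin n)) a b → mkQ Q Λ m a = mkQ Q Λ m b :=
    fun h => RingQuot.mkAlgHom_rel k (Or.inl h)
  have crel : ∀ {a b}, CycRel k Λ (Set.univ : Set (Fin m → Fin n)) a b →
      mkQ Q Λ m a = mkQ Q Λ m b :=
    fun h => RingQuot.mkAlgHom_rel k (Or.inr h)
  constructor
  · intro ν ν' h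
    simpa only [map_mul, map_zero] using rel (Rel.e_orth ν ν' h)
  · intro ν
    simpa only [map_mul] using rel (Rel.e_idem ν)
  · simpa only [map_sum, map_one] using rel (Rel.e_sum)
  · intro p ν
    simpa only [map_mul] using rel (Rel.xe p ν)
  · intro j h ν
    simpa only [map_mul] using rel (Rel.te j h ν)
  · intro a ha b hb hab
    simpa only [map_mul] using rel (Rel.tt a ha b hb hab)
  · intro j h ν h1 h2
    have := rel (Rel.tsq j h ν)
    rw [S.zero _ _ h1 h2] at this
    simpa only [map_mul, eval2_one, one_mul] using this
  · intro j h ν h1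
    have := rel (Rel.tsq j h ν)
    rw [h1, S.diag] at this
    simpa only [map_mul, eval2_zero, zero_mul, map_zero] using this
  · intro j h ν h1
    obtain ⟨a, b, r, ha, hQ⟩ := S.one _ _ h1
    refine ⟨a, b, r, ha, ?_⟩
    have := rel (Rel.tsq j h ν)
    rw [hQ, map_mul, map_mul, map_mul, map_eval2, eval2_add, eval2_monomial,
      eval2_monomial] at this
    simpa using this
  · intro j h ν h1
    simpa only [map_mul, map_add] using rel (Rel.tx_right j h ν h1)
  · intro j h ν p h1
    simpa only [map_mul, map_add] using rel (Rel.tx_comm j h ν p h1)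
  · intro j h1 h2 ν h3
    simpa only [map_mul, map_add] using rel (Rel.braid_ne j h1 h2 ν h3)
  · intro j h1 h2 ν h3 h4
    obtain ⟨a, b, r, ha, hQ⟩ := S.one _ _ h4
    refine ⟨a, ha, ?_⟩
    have := rel (Rel.braid_eq j h1 h2 ν h3)
    rw [hQ, Qbar_one, map_add, map_mul (mkQ Q Λ m) (eval3 _ _ _ _ _), map_eval3,
      eval3_monomial] at this
    simpa using this
  · intro j h1 h2 ν h3 h4
    obtain ⟨a, b, r, ha, hQ⟩ := S.two _ _ h4
    refine ⟨a, ha, ?_⟩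
    have := rel (Rel.braid_eq j h1 h2 ν h3)
    rw [hQ, Qbar_two, map_add, map_mul (mkQ Q Λ m) (eval3 _ _ _ _ _), map_eval3,
      eval3_add, eval3_monomial, eval3_monomial] at this
    simpa [smul_add] using this
  · intro ν p hp h0
    have := crel (CycRel.cyc ν (Set.mem_univ _) p hp)
    rw [h0] at this
    simpa using this
  · intro ν p hp h0
    have := crel (CycRel.cyc ν (Set.mem_univ _) p hp)
    rw [h0] at this
    simpa using this

/-- Images of the generators under the candidate homomorphism. -/
noncomputable def genMap (e : (Fin m → Fin n) → R) (t : (j : ℕ) → j + 1 < m → R) : Gen n m → R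
  | Gen.e ν => e ν
  | Gen.x _ => 0
  | Gen.t j h => t j h

theorem lift_rel {Q : Fin n → Fin n → MvPolynomial (Fin 2) k} (S : QShape A Q) (M : Mnsc A Λ m)
    {e : (Fin m → Fin n) → R} {t : (j : ℕ) → j + 1 < m → R}
    (H : Pkg n m (fun ν => TP A Λ ν 0) e t) (a b : FA k n m)
    (hab : CRel k Q (Set.univ : Set (Fin m → Fin n)) Λ a b) :
    FreeAlgebra.lift k (genMap e t) a = FreeAlgebra.lift k (genMap e t) b := by
  have hE : ∀ ν, FreeAlgebra.lift k (genMap e t) (Eg k ν) = e ν := fun ν => by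
    simp [Eg, genMap]
  have hX : ∀ p, FreeAlgebra.lift k (genMap e t) (Xg k p) = 0 := fun p => by
    simp [Xg, genMap]
  have hT : ∀ j h, FreeAlgebra.lift k (genMap e t) (Tg k j h) = t j h := fun j h => by
    simp [Tg, genMap]
  generalize FreeAlgebra.lift k (genMap e t) = f at hE hX hT ⊢
  rcases hab with h | h
  · cases h with
    | e_orth ν ν' hne => simp [hE, H.orth ν ν' hne]
    | e_idem ν => simp [hE, H.idem ν]
    | e_sum => simp [hE, H.sum]
    | e_out ν hν => exact absurd trivial hν
    | xx p q => simp [hX]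
    | xe p ν => simp [hX]
    | te j h ν => simp [hE, hT, H.te]
    | tt a ha b hb hab => simp [hT, H.tt a ha b hb hab]
    | tsq j h ν =>
      simp only [map_mul, map_eval2, hE, hX, hT]
      by_cases hP : TP A Λ ν 0
      · have hne : ν ⟨j, Nat.lt_of_succ_lt h⟩ ≠ ν ⟨j + 1, h⟩ := fun h3 =>
          M.not_TP_eq ν j h 0 (Nat.zero_le _) h3 hP
        by_cases h0 : A (ν ⟨j, Nat.lt_of_succ_lt h⟩) (ν ⟨j + 1, h⟩) = 0
        · rw [S.zero _ _ hne h0, eval2_one, one_mul,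
            H.tsq j h ν hP (M.TP_swap ν j h 0 (Nat.zero_le _) h0 hP)]
        · rw [mul_assoc, H.te, H.zero (swapSeq j h ν), zero_mul, mul_zero]
          · rcases M.off _ _ hne with h1 | h1 | h1
            · exact absurd h1 h0
            · obtain ⟨a, b, r, ha, hQ⟩ := S.one _ _ h1
              rw [hQ, eval2_add, eval2_monomial, eval2_monomial]
              simp
            · obtain ⟨a, b, r, ha, hQ⟩ := S.two _ _ h1
              rw [hQ, eval2_add, eval2_monomial, eval2_monomial]
              simp
          · intro h4
            exact h0 (M.orth_of_swap ν j h 0 (Nat.zero_le _) hP (TP_mono (Nat.zero_le _) h4))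
      · simp [H.zero ν hP]
    | tx_left j h ν hv =>
      have := H.zero ν (M.not_TP_eq ν j h 0 (Nat.zero_le _) hv)
      simp [hE, this]
    | tx_right j h ν hv =>
      have := H.zero ν (M.not_TP_eq ν j h 0 (Nat.zero_le _) hv)
      simp [hE, this]
    | tx_comm j h ν p hc => simp [hX]
    | braid_ne j h1 h2 ν hv =>
      simp only [map_mul, hE, hT]
      exact H.br j h1 h2 ν
    | braid_eq j h1 h2 ν hv =>
      simp only [map_mul, map_add, map_eval3, hE, hT, hX]
      by_cases hP : TP A Λ ν 0
      · obtain ⟨a, b, r, ha, hQ⟩ := S.two _ _ (M.iji ν j h1 h2 hv hP)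
        rw [hQ, Qbar_two, eval3_add, eval3_monomial, eval3_monomial, H.br j h1 h2 ν]
        simp
      · simp [H.zero ν hP]
  · cases h with
    | cyc ν hν p hp =>
      rcases M.lam (ν p) with h0 | h0
      · have : e ν = 0 := by
          apply H.zero
          intro hP
          have := hP p (Nat.zero_le _)
          rw [wt_end _ _ hp.ge] at this
          omega
        simp [hE, this]
      · simp [hX, h0]

/-- The homomorphism out of the cyclotomic quotient given by the reduced presentation. -/
noncomputable def liftQ {Q : Fin n → Fin n → MvPolynomial (Fin 2) k} (S : QShape A Q)
    (M : Mnsc A Λ m) {e : (Fin m → Fin n) → R} {t : (j : ℕ) → j + 1 < m → R}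
    (H : Pkg n m (fun ν => TP A Λ ν 0) e t) : RQ Q Λ m →ₐ[k] R :=
  RingQuot.liftAlgHom k ⟨FreeAlgebra.lift k (genMap e t), fun {a b} h => lift_rel S M H a b h⟩

theorem liftQ_mk {Q : Fin n → Fin n → MvPolynomial (Fin 2) k} (S : QShape A Q)
    (M : Mnsc A Λ m) {e : (Fin m → Fin n) → R} {t : (j : ℕ) → j + 1 < m → R}
    (H : Pkg n m (fun ν => TP A Λ ν 0) e t) (g : Gen n m) :
    liftQ S M H (mkQ Q Λ m (FreeAlgebra.ι k g)) = genMap e t g := by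
  unfold liftQ mkQ
  rw [RingQuot.liftAlgHom_mkAlgHom_apply]
  simp

theorem RQ_hom_ext {Q : Fin n → Fin n → MvPolynomial (Fin 2) k} (f g : RQ Q Λ m →ₐ[k] R)
    (h : ∀ a, f (mkQ Q Λ m (FreeAlgebra.ι k a)) = g (mkQ Q Λ m (FreeAlgebra.ι k a))) : f = g := by
  apply RingQuot.ringQuot_ext'
  apply FreeAlgebra.hom_ext
  funext a
  exact h a

theorem main_iso {n' : ℕ} {A' : Fin n' → Fin n' → ℤ} {Λ' : Fin n' → ℤ}
    {Q : Fin n → Fin n → MvPolynomial (Fin 2) k} {Q' : Fin n' → Fin n' → MvPolynomial (Fin 2) k}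
    (S : QShape A Q) (M : Mnsc A Λ m) (S' : QShape A' Q') (M' : Mnsc A' Λ' m)
    (φ : {ν : Fin m → Fin n // TP A Λ ν 0} ≃ {ν : Fin m → Fin n' // TP A' Λ' ν 0})
    (hφ : ∀ j h (ν ν' : {ν : Fin m → Fin n // TP A Λ ν 0}), ν'.1 = swapSeq j h ν.1 ↔
      (φ ν').1 = swapSeq j h (φ ν).1) :
    Nonempty (RQ Q Λ m ≃ₐ[k] RQ Q' Λ' m) := by
  have P1 := (qh_RQ (m := m) (Λ := Λ) S).pkg M
  have P2 := (qh_RQ (m := m) (Λ := Λ') S').pkg M'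
  have x1 := (qh_RQ (m := m) (Λ := Λ) S).x_zero M
  have x2 := (qh_RQ (m := m) (Λ := Λ') S').x_zero M'
  have T1 := P1.transport φ hφ
  have T2 := P2.transport φ.symm (fun j h ν ν' => by
    rw [hφ]; simp)
  let F := liftQ S M T2
  let G := liftQ S' M' T1
  refine ⟨AlgEquiv.ofAlgHom F G ?_ ?_⟩
  · apply RQ_hom_ext
    intro a
    simp only [AlgHom.comp_apply, AlgHom.id_apply, G, liftQ_mk]
    cases a with
    | e ν =>
      simp only [genMap]
      by_cases hν : TP A' Λ' ν 0
      · rw [dif_pos hν]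
        have := liftQ_mk S M T2 (Gen.e (φ.symm ⟨ν, hν⟩).1)
        simp only [genMap] at this
        rw [dif_pos (φ.symm ⟨ν, hν⟩).2] at this
        simp only [Equiv.symm_symm, Subtype.coe_eta, Equiv.apply_symm_apply] at this
        exact this
      · rw [dif_neg hν, map_zero]
        exact (P2.zero ν hν).symm
    | x p =>
      simp only [genMap, map_zero]
      exact (x2 p).symm
    | t j h =>
      exact liftQ_mk S M T2 (Gen.t j h)
  · apply RQ_hom_ext
    intro a
    simp only [AlgHom.comp_apply, AlgHom.id_apply, F, liftQ_mk]
    cases a with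
    | e ν =>
      simp only [genMap]
      by_cases hν : TP A Λ ν 0
      · rw [dif_pos hν]
        have := liftQ_mk S' M' T1 (Gen.e (φ ⟨ν, hν⟩).1)
        simp only [genMap] at this
        rw [dif_pos (φ ⟨ν, hν⟩).2] at this
        simp only [Subtype.coe_eta, Equiv.symm_apply_apply] at this
        exact this
      · rw [dif_neg hν, map_zero]
        exact (P1.zero ν hν).symm
    | x p =>
      simp only [genMap, map_zero]
      exact (x1 p).symm
    | t j h =>
      exact liftQ_mk S' M' T1 (Gen.t j h)

end Pres

/-! ### Types `B` and `D` -/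

section Types

open MvPolynomial

theorem two_terms {k : Type} [Field k] (p : MvPolynomial (Fin 2) k) (s r : ℕ) (hs : s ≠ 0)
    (h : ∀ dd ∈ p.support, (dd 0 = s ∧ dd 1 = 0) ∨ (dd 0 = 0 ∧ dd 1 = r)) :
    p = monomial (Finsupp.single (0 : Fin 2) s) (coeff (Finsupp.single (0 : Fin 2) s) p) +
      monomial (Finsupp.single 1 r) (coeff (Finsupp.single (1 : Fin 2) r) p) := by
  have hne : (Finsupp.single (0 : Fin 2) s) ≠ Finsupp.single 1 r := by
    intro h
    have := DFunLike.congr_fun h 0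
    simp at this
    exact hs this
  ext dd
  rw [coeff_add, coeff_monomial, coeff_monomial]
  by_cases h1 : Finsupp.single (0 : Fin 2) s = dd
  · subst h1
    rw [if_pos rfl, if_neg hne.symm, add_zero]
  · by_cases h2 : Finsupp.single (1 : Fin 2) r = dd
    · subst h2
      rw [if_pos rfl, if_neg hne, zero_add]
    · rw [if_neg h1, if_neg h2, add_zero]
      by_contra h3
      rcases h dd (mem_support_iff.2 h3) with ⟨a, b⟩ | ⟨a, b⟩
      · apply h1
        ext i
        fin_cases i
        · simp [a]
        · simp [b]
      · apply h2
        ext i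
        fin_cases i
        · simp [a]
        · simp [b]

theorem shape_of_adm {k : Type} [Field k] {n : ℕ} {A : Fin n → Fin n → ℤ} {d : Fin n → ℤ}
    {Q : Fin n → Fin n → MvPolynomial (Fin 2) k} (h : QAdmissible k A d Q)
    (hA : ∀ i, A i i = 2)
    (h1 : ∀ i j, i ≠ j → A i j = -1 → ∃ r : ℕ, ∀ p q : ℕ,
      (2 * d i) * (p : ℤ) + (2 * d j) * (q : ℤ) = -2 * (d i * A i j) →
        (p = 1 ∧ q = 0) ∨ (p = 0 ∧ q = r + 1))
    (h2 : ∀ i j, i ≠ j → A i j = -2 → ∃ r : ℕ, ∀ p q : ℕ,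
      (2 * d i) * (p : ℤ) + (2 * d j) * (q : ℤ) = -2 * (d i * A i j) →
        (p = 2 ∧ q = 0) ∨ (p = 0 ∧ q = r + 1)) : QShape A Q := by
  obtain ⟨a1, _, a3, a4, a5⟩ := h
  refine ⟨a1, fun i j hij h0 => a3 i j hij (by rw [h0, mul_zero]), ?_, ?_⟩
  · intro i j hm
    have hij : i ≠ j := by
      rintro rfl
      have := hA i
      omega
    obtain ⟨r, hr⟩ := h1 i j hij hm
    have h5 := a5 i j hij
    rw [hm] at h5
    exact ⟨_, _, r, h5, two_terms _ 1 (r + 1) (by norm_num)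
      (fun dd hdd => hr _ _ (a4 i j hij dd hdd))⟩
  · intro i j hm
    have hij : i ≠ j := by
      rintro rfl
      have := hA i
      omega
    obtain ⟨r, hr⟩ := h2 i j hij hm
    have h5 := a5 i j hij
    rw [hm] at h5
    exact ⟨_, _, r, h5, two_terms _ 2 (r + 1) (by norm_num)
      (fun dd hdd => hr _ _ (a4 i j hij dd hdd))⟩

theorem AB_diag (n : ℕ) (i : Fin n) : AB n i i = 2 := by simp [AB]

theorem AD_diag (n : ℕ) (i : Fin n) : AD n i i = 2 := by simp [AD]

theorem shape_B {k : Type} [Field k] {n : ℕ} {Q : Fin n → Fin n → MvPolynomial (Fin 2) k}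
    (h : QAdmissible k (AB n) (dB n) Q) : QShape (AB n) Q := by
  apply shape_of_adm h (AB_diag n)
  · intro i j hij hm
    by_cases hj : (j : ℕ) = 0
    · have hi : (i : ℕ) ≠ 0 := fun hi => hij (Fin.ext (by omega))
      refine ⟨1, fun p q hpq => ?_⟩
      rw [hm] at hpq
      simp only [dB, hj, hi, if_true, if_false] at hpq
      omega
    · have hi : (i : ℕ) ≠ 0 := by
        intro hi
        unfold AB at hm
        rw [if_neg hij] at hm
        split_ifs at hm <;> omega
      refine ⟨0, fun p q hpq => ?_⟩
      rw [hm] at hpq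
      simp only [dB, hj, hi, if_false] at hpq
      omega
  · intro i j hij hm
    have : (i : ℕ) = 0 ∧ (j : ℕ) = 1 := by
      unfold AB at hm
      rw [if_neg hij] at hm
      split_ifs at hm
      · assumption
      · omega
    refine ⟨0, fun p q hpq => ?_⟩
    rw [hm] at hpq
    simp [dB, this.1, this.2] at hpq
    omega

theorem shape_D {k : Type} [Field k] {n : ℕ} {Q : Fin n → Fin n → MvPolynomial (Fin 2) k}
    (h : QAdmissible k (AD n) (fun _ => 1) Q) : QShape (AD n) Q := by
  apply shape_of_adm h (AD_diag n)
  · intro i j hij hm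
    refine ⟨0, fun p q hpq => ?_⟩
    rw [hm] at hpq
    omega
  · intro i j hij hm
    unfold AD at hm
    rw [if_neg hij] at hm
    split_ifs at hm <;> omega

theorem eps_B {n m : ℕ} (hn : 0 < n) (ν : Fin m → Fin n) :
    ∀ l p : ℕ, p + l = m → TP (AB n) (Pi.single ⟨0, hn⟩ 1) ν p →
      ∃ ε : ℕ → ℤ, (∀ i, ε i = 1 ∨ ε i = -1) ∧
        ∀ i : Fin n, 2 * wt (AB n) (Pi.single ⟨0, hn⟩ 1) ν p i =
          if (i : ℕ) = 0 then 2 * ε 0 else ε i - ε (i - 1) := by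
  intro l
  induction l with
  | zero =>
    intro p hp _
    refine ⟨fun _ => 1, fun _ => Or.inl rfl, fun i => ?_⟩
    rw [wt_end _ _ (by omega)]
    by_cases hi : (i : ℕ) = 0
    · have : i = ⟨0, hn⟩ := Fin.ext hi
      subst this
      simp
    · have : i ≠ ⟨0, hn⟩ := fun h => hi (congrArg Fin.val h)
      simp [hi, this]
  | succ l ih =>
    intro p hp hT
    have hpm : p < m := by omega
    obtain ⟨hT1, hw⟩ := (TP_step hpm).1 hT
    obtain ⟨ε, hε, hwt⟩ := ih (p + 1) (by omega) hT1
    generalize hj : ν ⟨p, hpm⟩ = j at hw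
    have hwj := hwt j
    rw [hw] at hwj
    have e1 := hε j
    have e2 := hε (j - 1)
    refine ⟨fun a => if a = (j : ℕ) then -1 else if a + 1 = (j : ℕ) then 1 else ε a, ?_, ?_⟩
    · intro a
      have := hε a
      dsimp only
      split_ifs <;> simp_all
    · intro i
      rw [wt_succ _ _ hpm, hj, mul_sub, hwt i]
      unfold AB
      by_cases hij : i = j
      · subst hij
        dsimp only
        split_ifs at hwj ⊢ <;> omega
      · have hij' : (i : ℕ) ≠ j := fun h => hij (Fin.ext h)
        rw [if_neg hij]
        dsimp only
        by_cases a1 : (i : ℕ) + 1 = j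
        · have h0 : (j : ℕ) ≠ 0 := by omega
          have h1 : (j : ℕ) - 1 = i := by omega
          rw [if_neg h0, h1] at hwj
          by_cases hi : (i : ℕ) = 0
          · rw [hi] at hwj
            rw [if_pos hi, if_pos hi, if_pos (by omega), if_neg (by omega), if_pos (by omega)]
            rw [h1, hi] at e2
            omega
          · rw [if_neg hi, if_neg hi, if_neg (by omega), if_pos (by omega), if_neg (by omega),
              if_pos (by omega), if_neg (by omega), if_neg (by omega)]
            rw [h1] at e2
            omega
        · by_cases a2 : (j : ℕ) + 1 = i
          · have h1 : (i : ℕ) - 1 = j := by omega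
            rw [if_neg (by omega), if_neg (by omega), if_pos (by omega), if_neg (by omega),
              if_neg (by omega), if_neg (by omega), if_pos (by omega), h1]
            split_ifs at hwj
            · rename_i h0
              rw [h0] at e1 ⊢
              omega
            · omega
          · by_cases hi : (i : ℕ) = 0
            · rw [if_pos hi, if_pos hi, if_neg (by omega), if_neg (by omega), if_neg (by omega),
                if_neg (by omega)]
              omega
            · rw [if_neg hi, if_neg hi, if_neg (by omega), if_neg (by omega), if_neg (by omega),
                if_neg (by omega), if_neg (by omega), if_neg (by omega)]
              omega

theorem mnsc_B {n : ℕ} (hn : 0 < n) (m : ℕ) : Mnsc (AB n) (Pi.single ⟨0, hn⟩ 1) m where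
  diag := AB_diag n
  off := by
    intro i j hij
    unfold AB
    rw [if_neg hij]
    split_ifs <;> simp
  symm0 := by
    intro i j h
    unfold AB at h ⊢
    split_ifs at h ⊢ <;> first | rfl | (exfalso; simp_all; done) | (exfalso; omega)
  lam := by
    intro i
    by_cases h : i = ⟨0, hn⟩
    · subst h; simp
    · simp [h]
  bd := by
    intro ν p hT i
    rcases Nat.le_total p m with hp | hp
    · obtain ⟨ε, hε, hw⟩ := eps_B hn ν (m - p) p (by omega) hT
      have h1 := hw i
      have h2 := hε i
      have h3 := hε (i - 1)
      have h4 := hε 0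
      split_ifs at h1 <;> omega
    · rw [wt_end _ _ hp]
      by_cases h : i = ⟨0, hn⟩
      · subst h; simp
      · simp [h]

theorem eps_D {n m : ℕ} (z : Fin n) (hz : (z : ℕ) < 2) (ν : Fin m → Fin n) :
    ∀ l p : ℕ, p + l = m → TP (AD n) (Pi.single z 1) ν p →
      ∃ ε : ℕ → ℤ, (∀ i, ε i = 1 ∨ ε i = -1) ∧
        ∀ i : Fin n, 2 * wt (AD n) (Pi.single z 1) ν p i =
          if (i : ℕ) = 0 then ε 0 + ε 1 else ε i - ε (i - 1) := by
  intro l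
  induction l with
  | zero =>
    intro p hp _
    refine ⟨fun a => if a < (z : ℕ) then -1 else 1, fun a => by dsimp only; split_ifs <;> simp,
      fun i => ?_⟩
    rw [wt_end _ _ (by omega)]
    by_cases hi : i = z
    · subst hi
      rw [Pi.single_eq_same]
      dsimp only
      split_ifs <;> omega
    · have hi' : (i : ℕ) ≠ z := fun h => hi (Fin.ext h)
      rw [Pi.single_eq_of_ne hi]
      dsimp only
      split_ifs <;> omega
  | succ l ih =>
    intro p hp hT
    have hpm : p < m := by omega
    obtain ⟨hT1, hw⟩ := (TP_step hpm).1 hT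
    obtain ⟨ε, hε, hwt⟩ := ih (p + 1) (by omega) hT1
    generalize hj : ν ⟨p, hpm⟩ = j at hw
    have hwj := hwt j
    rw [hw] at hwj
    by_cases hj0 : (j : ℕ) = 0
    · rw [if_pos hj0] at hwj
      have e0 := hε 0
      have e1 := hε 1
      refine ⟨fun a => if a < 2 then -1 else ε a, ?_, ?_⟩
      · intro a
        dsimp only
        split_ifs
        · simp
        · exact hε a
      · intro i
        rw [wt_succ _ _ hpm, hj, mul_sub, hwt i]
        unfold AD
        dsimp only
        by_cases hi0 : (i : ℕ) = 0
        · have : i = j := Fin.ext (by omega)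
          rw [if_pos this, if_pos hi0, if_pos hi0]
          simp
          omega
        · have : i ≠ j := fun h => hi0 (by rw [h, hj0])
          rw [if_neg this, if_neg hi0, if_neg hi0]
          by_cases hi1 : (i : ℕ) = 1
          · rw [if_neg (by omega), if_neg (by omega), if_neg (by omega), if_pos (by omega),
              if_pos (by omega), hi1]
            simp
            omega
          · by_cases hi2 : (i : ℕ) = 2
            · rw [if_pos (by omega), if_neg (by omega), if_pos (by omega), hi2]
              simp
              omega
            · rw [if_neg (by omega), if_neg (by omega), if_neg (by omega), if_neg (by omega),
                if_neg (by omega)]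
              omega
    · rw [if_neg hj0] at hwj
      have e1 := hε j
      have e2 := hε (j - 1)
      refine ⟨fun a => if a = (j : ℕ) then -1 else if a + 1 = (j : ℕ) then 1 else ε a, ?_, ?_⟩
      · intro a
        have := hε a
        dsimp only
        split_ifs <;> simp_all
      · intro i
        rw [wt_succ _ _ hpm, hj, mul_sub, hwt i]
        unfold AD
        dsimp only
        by_cases hij : i = j
        · subst hij
          rw [if_pos rfl, if_neg hj0, if_neg hj0, if_pos rfl, if_neg (by omega), if_pos (by omega)]
          omega
        · have hij' : (i : ℕ) ≠ j := fun h => hij (Fin.ext h)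
          rw [if_neg hij]
          by_cases hi0 : (i : ℕ) = 0
          · rw [if_pos hi0, if_pos hi0]
            by_cases h1 : (j : ℕ) = 1
            · rw [h1] at hwj e1 e2
              simp only [hi0, h1] at hwj e1 e2 ⊢
              norm_num at hwj e1 e2 ⊢
              omega
            · by_cases h2 : (j : ℕ) = 2
              · rw [h2] at hwj e1 e2
                simp only [hi0, h2] at hwj e1 e2 ⊢
                norm_num at hwj e1 e2 ⊢
                omega
              · rw [if_neg (by omega), if_neg (by omega), if_neg (by omega), if_neg (by omega),
                  if_neg (by omega), if_neg (by omega), if_neg (by omega)]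
                omega
          · rw [if_neg hi0, if_neg hi0, if_neg hij']
            by_cases a1 : (i : ℕ) + 1 = j
            · have h1 : (j : ℕ) - 1 = i := by omega
              rw [h1] at hwj e2
              have : (if (i : ℕ) = 0 ∧ (j : ℕ) = 2 ∨ (i : ℕ) = 2 ∧ (j : ℕ) = 0 then (-1 : ℤ)
                else if (i : ℕ) = 1 ∧ (j : ℕ) = 2 ∨ (i : ℕ) = 2 ∧ (j : ℕ) = 1 then -1
                else if (2 ≤ (i : ℕ) ∧ 2 ≤ (j : ℕ)) ∧
                  ((i : ℕ) + 1 = (j : ℕ) ∨ (j : ℕ) + 1 = (i : ℕ)) then -1 else 0) = -1 := by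
                split_ifs <;> first | rfl | omega
              rw [this, if_pos a1, if_neg (by omega), if_neg (by omega)]
              omega
            · by_cases a2 : (j : ℕ) + 1 = i
              · have h1 : (i : ℕ) - 1 = j := by omega
                have : (if (i : ℕ) = 0 ∧ (j : ℕ) = 2 ∨ (i : ℕ) = 2 ∧ (j : ℕ) = 0 then (-1 : ℤ)
                  else if (i : ℕ) = 1 ∧ (j : ℕ) = 2 ∨ (i : ℕ) = 2 ∧ (j : ℕ) = 1 then -1
                  else if (2 ≤ (i : ℕ) ∧ 2 ≤ (j : ℕ)) ∧
                    ((i : ℕ) + 1 = (j : ℕ) ∨ (j : ℕ) + 1 = (i : ℕ)) then -1 else 0) = -1 := by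
                  split_ifs <;> first | rfl | omega
                rw [this, if_neg a1, h1, if_pos rfl]
                omega
              · have : (if (i : ℕ) = 0 ∧ (j : ℕ) = 2 ∨ (i : ℕ) = 2 ∧ (j : ℕ) = 0 then (-1 : ℤ)
                  else if (i : ℕ) = 1 ∧ (j : ℕ) = 2 ∨ (i : ℕ) = 2 ∧ (j : ℕ) = 1 then -1
                  else if (2 ≤ (i : ℕ) ∧ 2 ≤ (j : ℕ)) ∧
                    ((i : ℕ) + 1 = (j : ℕ) ∨ (j : ℕ) + 1 = (i : ℕ)) then -1 else 0) = 0 := by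
                  split_ifs <;> first | rfl | omega
                rw [this, if_neg a1, if_neg (by omega), if_neg (by omega)]
                omega

theorem mnsc_D {n : ℕ} (z : Fin n) (hz : (z : ℕ) < 2) (m : ℕ) :
    Mnsc (AD n) (Pi.single z 1) m where
  diag := AD_diag n
  off := by
    intro i j hij
    unfold AD
    rw [if_neg hij]
    split_ifs <;> simp
  symm0 := by
    intro i j h
    unfold AD at h ⊢
    split_ifs at h ⊢ <;> first | rfl | (exfalso; simp_all; done) | (exfalso; omega)
  lam := by
    intro i
    by_cases h : i = z
    · subst h; simp
    · simp [h]
  bd := by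
    intro ν p hT i
    rcases Nat.le_total p m with hp | hp
    · obtain ⟨ε, hε, hw⟩ := eps_D z hz ν (m - p) p (by omega) hT
      have h1 := hw i
      have h2 := hε i
      have h3 := hε (i - 1)
      have h4 := hε 0
      have h5 := hε 1
      split_ifs at h1 <;> omega
    · rw [wt_end _ _ hp]
      by_cases h : i = z
      · subst h; simp
      · simp [h]

end Types

section Fold

theorem pos0B {n : ℕ} (hn : 2 ≤ n) : 0 < n := Nat.lt_of_lt_of_le Nat.zero_lt_two hn

theorem pos0D {n : ℕ} (_ : 2 ≤ n) : 0 < n + 1 := Nat.succ_pos n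

theorem pos1D {n : ℕ} (hn : 2 ≤ n) : 1 < n + 1 := Nat.succ_lt_succ (pos0B hn)

/-- The folding map from the nodes of `D_{n+1}` to the nodes of `B_n`. -/
def fold (n : ℕ) (hn : 2 ≤ n) (a : Fin (n + 1)) : Fin n := ⟨(a : ℕ) - 1, by omega⟩

set_option maxHeartbeats 4000000 in
theorem fold_row0_aux (n : ℕ) (hn : 2 ≤ n) (a : Fin (n + 1)) (i : Fin n) (u v : Fin (n + 1))
    (hi : (i : ℕ) = 0) (hu : (u : ℕ) = 0) (hv : (v : ℕ) = 1) :
    AB n i (fold n hn a) = AD (n + 1) u a + AD (n + 1) v a := by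
  unfold AB AD fold
  simp only [Fin.ext_iff]
  split_ifs <;> omega

theorem AB_row0_even (n : ℕ) (i a : Fin n) (hi : (i : ℕ) = 0) : (2 : ℤ) ∣ AB n i a := by
  unfold AB
  simp only [Fin.ext_iff]
  split_ifs <;> omega

theorem fold_row0 (n : ℕ) (hn : 2 ≤ n) (a : Fin (n + 1)) :
    AB n ⟨0, pos0B hn⟩ (fold n hn a) =
      AD (n + 1) ⟨0, pos0D hn⟩ a + AD (n + 1) ⟨1, pos1D hn⟩ a :=
  fold_row0_aux n hn a _ _ _ rfl rfl rfl

theorem fold_row (n : ℕ) (hn : 2 ≤ n) (b a : Fin (n + 1)) (hb : 2 ≤ (b : ℕ)) :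
    AB n (fold n hn b) (fold n hn a) = AD (n + 1) b a := by
  unfold AB AD fold
  simp only [Fin.ext_iff]
  split_ifs <;> omega

theorem fold_orth {n : ℕ} (hn : 2 ≤ n) (a b : Fin (n + 1)) (hab : fold n hn a ≠ fold n hn b)
    (h : AB n (fold n hn a) (fold n hn b) = 0) : AD (n + 1) a b = 0 := by
  unfold AB at h
  unfold AD
  unfold fold at h hab
  simp only [Fin.ext_iff, ne_eq] at h hab ⊢
  split_ifs at h ⊢ <;> omega

theorem fold_wt0 {n m : ℕ} (hn : 2 ≤ n) (z : Fin (n + 1)) (hz : (z : ℕ) < 2)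
    (ν : Fin m → Fin (n + 1)) (p : ℕ) :
    wt (AB n) (Pi.single ⟨0, pos0B hn⟩ 1) (fun q => fold n hn (ν q)) p ⟨0, pos0B hn⟩ =
      wt (AD (n + 1)) (Pi.single z 1) ν p ⟨0, pos0D hn⟩ +
        wt (AD (n + 1)) (Pi.single z 1) ν p ⟨1, pos1D hn⟩ := by
  have hs : (∑ q : Fin m, if p ≤ (q : ℕ) then AB n ⟨0, pos0B hn⟩ (fold n hn (ν q)) else 0) =
      (∑ q : Fin m, if p ≤ (q : ℕ) then AD (n + 1) ⟨0, pos0D hn⟩ (ν q) else 0) +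
      (∑ q : Fin m, if p ≤ (q : ℕ) then AD (n + 1) ⟨1, pos1D hn⟩ (ν q) else 0) := by
    rw [← Finset.sum_add_distrib]
    apply Finset.sum_congr rfl
    intro q _
    rw [fold_row0]
    split_ifs <;> simp
  have hl : (Pi.single z 1 : Fin (n + 1) → ℤ) ⟨0, pos0D hn⟩ +
      (Pi.single z 1 : Fin (n + 1) → ℤ) ⟨1, pos1D hn⟩ = 1 := by
    simp only [Pi.single_apply, Fin.ext_iff]
    split_ifs <;> omega
  unfold wt
  rw [hs, Pi.single_eq_same]
  linarith

theorem fold_wt {n m : ℕ} (hn : 2 ≤ n) (z : Fin (n + 1)) (hz : (z : ℕ) < 2)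
    (ν : Fin m → Fin (n + 1)) (p : ℕ) (b : Fin (n + 1)) (hb : 2 ≤ (b : ℕ)) :
    wt (AB n) (Pi.single ⟨0, pos0B hn⟩ 1) (fun q => fold n hn (ν q)) p (fold n hn b) =
      wt (AD (n + 1)) (Pi.single z 1) ν p b := by
  have h1 : fold n hn b ≠ ⟨0, pos0B hn⟩ := by
    intro h
    have := congrArg Fin.val h
    simp only [fold] at this
    omega
  have h2 : b ≠ z := by
    rintro rfl
    omega
  unfold wt
  rw [Pi.single_eq_of_ne h1, Pi.single_eq_of_ne h2]
  simp only [fold_row n hn b _ hb]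

theorem wt_B_odd {n m : ℕ} (hn : 2 ≤ n) (ν : Fin m → Fin n) (p : ℕ) :
    ∃ c : ℤ, wt (AB n) (Pi.single ⟨0, pos0B hn⟩ 1) ν p ⟨0, pos0B hn⟩ = 1 + 2 * c := by
  have : (2 : ℤ) ∣ ∑ q : Fin m, if p ≤ (q : ℕ) then AB n ⟨0, pos0B hn⟩ (ν q) else 0 := by
    apply Finset.dvd_sum
    intro q _
    split_ifs
    · exact AB_row0_even n _ _ rfl
    · exact dvd_zero _
  obtain ⟨c, hc⟩ := this
  refine ⟨-c, ?_⟩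
  unfold wt
  rw [hc, Pi.single_eq_same]
  ring

theorem fold_step {n m : ℕ} (hn : 2 ≤ n) (z : Fin (n + 1)) (hz : (z : ℕ) < 2)
    (ν : Fin m → Fin (n + 1)) (p : ℕ)
    (hT : TP (AD (n + 1)) (Pi.single z 1) ν p) (a : Fin (n + 1))
    (ha : wt (AD (n + 1)) (Pi.single z 1) ν p a = 1) :
    wt (AB n) (Pi.single ⟨0, pos0B hn⟩ 1) (fun q => fold n hn (ν q)) p (fold n hn a) = 1 := by
  by_cases h2 : 2 ≤ (a : ℕ)
  · rw [fold_wt hn z hz ν p a h2, ha]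
  · have h0 : fold n hn a = ⟨0, pos0B hn⟩ := Fin.ext (by simp only [fold]; omega)
    rw [h0]
    have hw := fold_wt0 hn z hz ν p
    obtain ⟨c, hc⟩ := wt_B_odd hn (fun q => fold n hn (ν q)) p
    have b0 := (mnsc_D z hz m).bd ν p hT ⟨0, pos0D hn⟩
    have b1 := (mnsc_D z hz m).bd ν p hT ⟨1, pos1D hn⟩
    have : a = ⟨0, pos0D hn⟩ ∨ a = ⟨1, pos1D hn⟩ := by
      simp only [Fin.ext_iff]
      omega
    rcases this with h | h <;> rw [h] at ha <;> omega

theorem fold_TP {n m : ℕ} (hn : 2 ≤ n) (z : Fin (n + 1)) (hz : (z : ℕ) < 2)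
    (ν : Fin m → Fin (n + 1)) (p : ℕ) (hT : TP (AD (n + 1)) (Pi.single z 1) ν p) :
    TP (AB n) (Pi.single ⟨0, pos0B hn⟩ 1) (fun q => fold n hn (ν q)) p := by
  intro q hq
  exact fold_step hn z hz ν _ (TP_mono (by omega) hT) _ (hT q hq)

theorem fold_inj {n m : ℕ} (hn : 2 ≤ n) (z : Fin (n + 1)) (hz : (z : ℕ) < 2)
    (ν ν' : Fin m → Fin (n + 1)) (hf : ∀ q, fold n hn (ν q) = fold n hn (ν' q)) :
    ∀ l p : ℕ, p + l = m → TP (AD (n + 1)) (Pi.single z 1) ν p →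
      TP (AD (n + 1)) (Pi.single z 1) ν' p → ∀ q : Fin m, p ≤ (q : ℕ) → ν q = ν' q := by
  intro l
  induction l with
  | zero =>
    intro p hp _ _ q hq
    have := q.2
    omega
  | succ l ih =>
    intro p hp hT hT' q hq
    have hpm : p < m := by omega
    obtain ⟨h1, h2⟩ := (TP_step hpm).1 hT
    obtain ⟨h1', h2'⟩ := (TP_step hpm).1 hT'
    have heq := ih (p + 1) (by omega) h1 h1'
    rcases Nat.eq_or_lt_of_le hq with h3 | h3
    · have : q = ⟨p, hpm⟩ := Fin.ext h3.symm
      subst this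
      rw [← wt_congr heq] at h2'
      have hw := fold_wt0 hn z hz ν (p + 1)
      have hs := fold_step hn z hz ν (p + 1) h1 _ h2
      have hv := congrArg Fin.val (hf ⟨p, hpm⟩)
      generalize ν ⟨p, hpm⟩ = a at *
      generalize ν' ⟨p, hpm⟩ = a' at *
      simp only [fold] at hv
      by_contra hne
      have hne' : (a : ℕ) ≠ a' := fun h => hne (Fin.ext h)
      have h0 : fold n hn a = ⟨0, pos0B hn⟩ := Fin.ext (by simp only [fold]; omega)
      rw [h0] at hs
      have hcase : (a = ⟨0, pos0D hn⟩ ∧ a' = ⟨1, pos1D hn⟩) ∨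
          (a = ⟨1, pos1D hn⟩ ∧ a' = ⟨0, pos0D hn⟩) := by
        simp only [Fin.ext_iff]
        omega
      rcases hcase with ⟨ha, ha2⟩ | ⟨ha, ha2⟩ <;> rw [ha] at h2 <;> rw [ha2] at h2' <;> omega
    · exact heq q h3

theorem fold_surj {n m : ℕ} (hn : 2 ≤ n) (z : Fin (n + 1)) (hz : (z : ℕ) < 2)
    (μ : Fin m → Fin n) :
    ∀ l p : ℕ, p + l = m → TP (AB n) (Pi.single ⟨0, pos0B hn⟩ 1) μ p →
      ∃ ν : Fin m → Fin (n + 1), (∀ q, fold n hn (ν q) = μ q) ∧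
        TP (AD (n + 1)) (Pi.single z 1) ν p := by
  intro l
  induction l with
  | zero =>
    intro p hp _
    refine ⟨fun q => (μ q).succ, fun q => ?_, TP_end _ _ (by omega)⟩
    apply Fin.ext
    simp [fold]
  | succ l ih =>
    intro p hp hT
    have hpm : p < m := by omega
    obtain ⟨h1, h2⟩ := (TP_step hpm).1 hT
    obtain ⟨ν, hf, hν⟩ := ih (p + 1) (by omega) h1
    have hμ : μ = fun q => fold n hn (ν q) := funext fun q => (hf q).symm
    have key : ∃ a : Fin (n + 1), fold n hn a = μ ⟨p, hpm⟩ ∧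
        wt (AD (n + 1)) (Pi.single z 1) ν (p + 1) a = 1 := by
      by_cases h0 : μ ⟨p, hpm⟩ = ⟨0, pos0B hn⟩
      · rw [h0] at h2
        have hw := fold_wt0 hn z hz ν (p + 1)
        rw [← hμ, h2] at hw
        have b0 := (mnsc_D z hz m).bd ν _ hν ⟨0, pos0D hn⟩
        have b1 := (mnsc_D z hz m).bd ν _ hν ⟨1, pos1D hn⟩
        by_cases hc : wt (AD (n + 1)) (Pi.single z 1) ν (p + 1) ⟨0, pos0D hn⟩ = 1
        · exact ⟨_, by rw [h0]; rfl, hc⟩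
        · exact ⟨⟨1, pos1D hn⟩, by rw [h0]; rfl, by omega⟩
      · have h0' : ((μ ⟨p, hpm⟩ : Fin n) : ℕ) ≠ 0 := fun h => h0 (Fin.ext h)
        have hfs : fold n hn (μ ⟨p, hpm⟩).succ = μ ⟨p, hpm⟩ := Fin.ext (by simp [fold])
        refine ⟨(μ ⟨p, hpm⟩).succ, hfs, ?_⟩
        rw [← fold_wt hn z hz ν (p + 1) _ (by simp only [Fin.val_succ]; omega), ← hμ, hfs, h2]
    obtain ⟨a, ha, hwa⟩ := key
    have hc : ∀ q : Fin m, p + 1 ≤ (q : ℕ) → ν q = Function.update ν ⟨p, hpm⟩ a q := by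
      intro q hq
      rw [Function.update_of_ne]
      intro h
      have := congrArg Fin.val h
      simp only at this
      omega
    refine ⟨Function.update ν ⟨p, hpm⟩ a, fun q => ?_, (TP_step hpm).2 ⟨TP_congr hc hν, ?_⟩⟩
    · by_cases h : q = ⟨p, hpm⟩
      · subst h
        rw [Function.update_self, ha]
      · rw [Function.update_of_ne h, hf]
    · rw [Function.update_self, ← wt_congr hc, hwa]

theorem iso_DB {n : ℕ} (hn : 2 ≤ n) (z : Fin (n + 1)) (hz : (z : ℕ) < 2)
    {k : Type} [Field k] (m : ℕ) (QB : Fin n → Fin n → MvPolynomial (Fin 2) k)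
    (hQB : QAdmissible k (AB n) (dB n) QB)
    (QD : Fin (n + 1) → Fin (n + 1) → MvPolynomial (Fin 2) k)
    (hQD : QAdmissible k (AD (n + 1)) (fun _ => 1) QD) :
    Nonempty (RQ QD (Pi.single z 1) m ≃ₐ[k] RQ QB (Pi.single ⟨0, pos0B hn⟩ 1) m) := by
  have hn0 : 0 < n := pos0B hn
  let f : {ν : Fin m → Fin (n + 1) // TP (AD (n + 1)) (Pi.single z 1) ν 0} →
      {ν : Fin m → Fin n // TP (AB n) (Pi.single ⟨0, hn0⟩ 1) ν 0} :=
    fun ν => ⟨fun q => fold n hn (ν.1 q), fold_TP hn z hz ν.1 0 ν.2⟩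
  have hinj : Function.Injective f := by
    intro ν ν' h
    apply Subtype.ext
    funext q
    exact fold_inj hn z hz ν.1 ν'.1 (fun q => congrFun (congrArg Subtype.val h) q) m 0 (by omega)
      ν.2 ν'.2 q (Nat.zero_le _)
  have hsurj : Function.Surjective f := by
    intro μ
    obtain ⟨ν, h1, h2⟩ := fold_surj hn z hz μ.1 m 0 (by omega) μ.2
    exact ⟨⟨ν, h2⟩, Subtype.ext (funext h1)⟩
  have hbij : Function.Bijective f := ⟨hinj, hsurj⟩
  apply main_iso (shape_D hQD) (mnsc_D z hz m) (shape_B hQB) (mnsc_B hn0 m)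
    (Equiv.ofBijective f hbij)
  intro j h ν ν'
  show ν'.1 = swapSeq j h ν.1 ↔ (f ν').1 = swapSeq j h (f ν).1
  constructor
  · intro hs
    funext q
    simp only [f, hs, swapSeq, Function.comp]
  · intro hs
    have hsw : TP (AB n) (Pi.single ⟨0, hn0⟩ 1) (swapSeq j h (f ν).1) 0 := hs ▸ (f ν').2
    have horth := (mnsc_B hn0 m).orth_of_swap (f ν).1 j h 0 (Nat.zero_le _) (f ν).2
      (TP_mono (Nat.zero_le _) hsw)
    have hne : (f ν).1 ⟨j, Nat.lt_of_succ_lt h⟩ ≠ (f ν).1 ⟨j + 1, h⟩ := fun h3 =>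
      (mnsc_B hn0 m).not_TP_eq (f ν).1 j h 0 (Nat.zero_le _) h3 (f ν).2
    have hD := (mnsc_D z hz m).TP_swap ν.1 j h 0 (Nat.zero_le _) (fold_orth hn _ _ hne horth) ν.2
    have : ν' = ⟨_, hD⟩ := by
      apply hinj
      apply Subtype.ext
      rw [hs]
      rfl
    rw [this]

end Fold

theorem cyclotomic_QHA_iso_B_D
    (k : Type) [Field k] (n : ℕ) (hn : 2 ≤ n) (m : ℕ)
    (QB : Fin n → Fin n → MvPolynomial (Fin 2) k)
    (hQB : QAdmissible k (AB n) (dB n) QB)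
    (QD : Fin (n + 1) → Fin (n + 1) → MvPolynomial (Fin 2) k)
    (hQD : QAdmissible k (AD (n + 1)) (fun _ => 1) QD) :
    -- R^{Λ₁}_{Bₙ}(m) ≅ R^{Λ₁}_{D_{n+1}}(m)
    Nonempty
      ((RingQuot (CRel k QB (Set.univ : Set (Fin m → Fin n))
          (Pi.single ⟨0, by omega⟩ 1))) ≃ₐ[k]
        (RingQuot (CRel k QD (Set.univ : Set (Fin m → Fin (n + 1)))
          (Pi.single ⟨0, by omega⟩ 1)))) ∧
    -- R^{Λ₁}_{D_{n+1}}(m) ≅ R^{Λ₂}_{D_{n+1}}(m)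
    Nonempty
      ((RingQuot (CRel k QD (Set.univ : Set (Fin m → Fin (n + 1)))
          (Pi.single ⟨0, by omega⟩ 1))) ≃ₐ[k]
        (RingQuot (CRel k QD (Set.univ : Set (Fin m → Fin (n + 1)))
          (Pi.single ⟨1, by omega⟩ 1)))) := by
  obtain ⟨f⟩ := iso_DB hn ⟨0, by omega⟩ (by simp) m QB hQB QD hQD
  obtain ⟨g⟩ := iso_DB hn ⟨1, by omega⟩ (by simp) m QB hQB QD hQD
  exact ⟨⟨f.symm⟩, ⟨f.trans g.symm⟩⟩

end QHA
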